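/- arXiv:2501.11303 — 2 statements merged into one kernel-verified Lean document; each statement's English description precedes it below -/
import Mathlib

section
/- Let k=(k_1,…,k_r) be a composition, let m be a positive integer, let α∈ℂ∖ℕ with ℜ(α)<1, and set n=|k|+1−dep(k). Then ∫_0^1 Li_k(x)·log^m(1−x)/(x(1−x)^α) dx = (−1)^m·m!·Σ_{|j|=m, dep(j)=n} B((←k^∨)_+; j)·ζ((←k^∨)_+ + j; 1−α), where the sum is over j∈ℕ_0^n with j_1+⋯+j_n=m. -/
open scoped BigOperators
open MeasureTheory

/-- Multiple polylogarithm `Li_k(z) = Σ_{n₁>⋯>n_r>0} z^{n₁}/(n₁^{k₁}⋯n_r^{k_r})`. -/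
noncomputable def MPL (k : List ℕ) (z : ℝ) : ℝ :=
  if h : 0 < k.length then
    ∑' n : {n : Fin k.length → ℕ // StrictAnti n ∧ ∀ i, 0 < n i},
      z ^ (n.1 ⟨0, h⟩) / ∏ i, (n.1 i : ℝ) ^ k.get i
  else 1

/-- Level-two multiple polylogarithm
`A(k;x) = 2^r Σ_{n₁>⋯>n_r>0, n_j ≡ r+1-j (mod 2)} x^{n₁}/(n₁^{k₁}⋯n_r^{k_r})`. -/
noncomputable def AFn (k : List ℕ) (x : ℝ) : ℝ :=
  if h : 0 < k.length then
    2 ^ k.length *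
      ∑' n : {n : Fin k.length → ℕ //
          StrictAnti n ∧ (∀ i, 0 < n i) ∧ ∀ i, n i % 2 = (k.length - i.val) % 2},
        x ^ (n.1 ⟨0, h⟩) / ∏ i, (n.1 i : ℝ) ^ k.get i
  else 1

/-- Multiple zeta value `ζ(k) = Σ_{n₁>⋯>n_r>0} ∏ 1/n_i^{k_i}`. -/
noncomputable def MZV (k : List ℕ) : ℝ :=
  ∑' n : {n : Fin k.length → ℕ // StrictAnti n ∧ ∀ i, 0 < n i},
    ∏ i, 1 / (n.1 i : ℝ) ^ k.get i

/-- Multiple zeta star value `ζ⋆(k) = Σ_{n₁≥⋯≥n_r>0} ∏ 1/n_i^{k_i}`. -/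
noncomputable def MZSV (k : List ℕ) : ℝ :=
  ∑' n : {n : Fin k.length → ℕ // Antitone n ∧ ∀ i, 0 < n i},
    ∏ i, 1 / (n.1 i : ℝ) ^ k.get i

/-- Multiple T-value `T(k) = 2^r Σ_{n₁>⋯>n_r>0, n_j ≡ r+1-j (mod 2)} ∏ 1/n_i^{k_i}`. -/
noncomputable def MTV (k : List ℕ) : ℝ :=
  2 ^ k.length *
    ∑' n : {n : Fin k.length → ℕ //
        StrictAnti n ∧ (∀ i, 0 < n i) ∧ ∀ i, n i % 2 = (k.length - i.val) % 2},
      ∏ i, 1 / (n.1 i : ℝ) ^ k.get i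

/-- Hurwitz-type multiple zeta value `ζ(k;α) = Σ_{n₁>⋯>n_r>0} ∏ (n_i+α-1)^{-k_i}`. -/
noncomputable def HMZV (k : List ℕ) (α : ℂ) : ℂ :=
  ∑' n : {n : Fin k.length → ℕ // StrictAnti n ∧ ∀ i, 0 < n i},
    ∏ i, ((n.1 i : ℂ) + α - 1) ^ (-(k.get i : ℤ))

/-- Hurwitz-type multiple zeta star value `ζ⋆(k;α) = Σ_{n₁≥⋯≥n_r>0} ∏ (n_i+α-1)^{-k_i}`. -/
noncomputable def HMZSV (k : List ℕ) (α : ℂ) : ℂ :=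
  ∑' n : {n : Fin k.length → ℕ // Antitone n ∧ ∀ i, 0 < n i},
    ∏ i, ((n.1 i : ℂ) + α - 1) ^ (-(k.get i : ℤ))

/-- Hurwitz-type multiple T-value
`T(k;α) = Σ_{m₁>⋯>m_r>0} 2^r ∏_i (2m_i - r - 2 + i + α)^{-k_i}` (1-indexed `i`). -/
noncomputable def HMTV (k : List ℕ) (α : ℂ) : ℂ :=
  ∑' n : {n : Fin k.length → ℕ // StrictAnti n ∧ ∀ i, 0 < n i},
    2 ^ k.length *
      ∏ i, (2 * (n.1 i : ℂ) - (k.length : ℂ) - 1 + (i.val : ℂ) + α) ^ (-(k.get i : ℤ))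

/-- The boolean word (sequence of bits between consecutive units) of a composition. -/
def toWord : List ℕ → List Bool
  | [] => []
  | [a] => List.replicate (a - 1) false
  | a :: b :: rest => List.replicate (a - 1) false ++ true :: toWord (b :: rest)

/-- The composition corresponding to a boolean word. -/
def fromWord : List Bool → List ℕ
  | [] => [1]
  | false :: w =>
    match fromWord w with
    | [] => [1]
    | a :: t => (a + 1) :: t
  | true :: w => 1 :: fromWord w

/-- Hoffman dual of a composition: swap commas and plus signs in
`k = (1+⋯+1, …, 1+⋯+1)`. -/
def HDual (k : List ℕ) : List ℕ := fromWord ((toWord k).map fun b => !b)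

/-- `k₊ = (k₁+1, k₂, …, k_r)`. -/
def plusOne : List ℕ → List ℕ
  | [] => []
  | a :: t => (a + 1) :: t

/-- `Refines l k` means the composition `k` can be obtained from `l`
by combining some consecutive parts of `l`, i.e. `l ⪰ k`. -/
inductive Refines : List ℕ → List ℕ → Prop
  | nil : Refines [] []
  | cons (b l k : List ℕ) : b ≠ [] → Refines l k → Refines (b ++ l) (b.sum :: k)

/-- Arakawa–Kaneko zeta function `ξ(s;k) = (1/Γ(s)) ∫_0^∞ t^{s-1}/(e^t-1) Li_k(1-e^{-t}) dt`. -/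
noncomputable def xiAK (s : ℂ) (k : List ℕ) : ℂ :=
  (1 / Complex.Gamma s) *
    ∫ t in Set.Ioi (0 : ℝ),
      (t : ℂ) ^ (s - 1) / ((Real.exp t : ℂ) - 1) * (MPL k (1 - Real.exp (-t)) : ℂ)

/-- Kaneko–Tsumura η-function `η(s;k) = (1/Γ(s)) ∫_0^∞ t^{s-1}/(1-e^t) Li_k(1-e^{t}) dt`. -/
noncomputable def etaKT (s : ℂ) (k : List ℕ) : ℂ :=
  (1 / Complex.Gamma s) *
    ∫ t in Set.Ioi (0 : ℝ),
      (t : ℂ) ^ (s - 1) / (1 - (Real.exp t : ℂ)) * (MPL k (1 - Real.exp t) : ℂ)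

/-- Kaneko–Tsumura ψ-function `ψ(s;k) = (1/Γ(s)) ∫_0^∞ t^{s-1} A(k; tanh(t/2))/sinh(t) dt`. -/
noncomputable def psiKT (s : ℂ) (k : List ℕ) : ℂ :=
  (1 / Complex.Gamma s) *
    ∫ t in Set.Ioi (0 : ℝ),
      (t : ℂ) ^ (s - 1) * ((AFn k (Real.tanh (t / 2)) / Real.sinh t : ℝ) : ℂ)

/-- Riemann zeta value `ζ(a) = Σ_{n>0} 1/n^a`. -/
noncomputable def zeta1 (a : ℕ) : ℝ := ∑' n : {n : ℕ // 0 < n}, 1 / (n.1 : ℝ) ^ a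

/-- Double zeta value `ζ(a,b) = Σ_{n₁>n₂>0} 1/(n₁^a n₂^b)`. -/
noncomputable def zeta2 (a b : ℕ) : ℝ :=
  ∑' p : {p : ℕ × ℕ // p.2 < p.1 ∧ 0 < p.2}, 1 / ((p.1.1 : ℝ) ^ a * (p.1.2 : ℝ) ^ b)

/-- Single T-value `T(a) = 2 Σ_{n>0 odd} 1/n^a`. -/
noncomputable def T1 (a : ℕ) : ℝ := 2 * ∑' n : {n : ℕ // 0 < n ∧ n % 2 = 1}, 1 / (n.1 : ℝ) ^ a

/-- Double T-value `T(a,b) = 4 Σ_{n₁>n₂>0, n₁ even, n₂ odd} 1/(n₁^a n₂^b)`. -/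
noncomputable def T2 (a b : ℕ) : ℝ :=
  4 * ∑' p : {p : ℕ × ℕ // p.2 < p.1 ∧ 0 < p.2 ∧ p.1 % 2 = 0 ∧ p.2 % 2 = 1},
    1 / ((p.1.1 : ℝ) ^ a * (p.1.2 : ℝ) ^ b)


namespace Pf

open Set Filter Topology

/-- The logarithmic weight. -/
noncomputable def Lp (m : ℕ) (y : ℝ) : ℝ := (-Real.log y) ^ m / (m.factorial : ℝ)

/-- Complex kernel. -/
noncomputable def ker (m n : ℕ) (β : ℂ) (y : ℝ) : ℂ :=
  (y : ℂ) ^ (β - 1) * (((1 - y) ^ n * Lp m y : ℝ) : ℂ)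

/-- Real kernel. -/
noncomputable def kerR (m n : ℕ) (s : ℝ) (y : ℝ) : ℝ :=
  y ^ (s - 1) * ((1 - y) ^ n * Lp m y)

noncomputable def bb (m n : ℕ) (β : ℂ) : ℂ := ∫ y in Ioo (0:ℝ) 1, ker m n β y

noncomputable def BB (m n : ℕ) (s : ℝ) : ℝ := ∫ y in Ioo (0:ℝ) 1, kerR m n s y

/-- Shift a sequence. -/
def prv {K : Type*} [Zero K] (f : ℕ → K) : ℕ → K
  | 0 => 0
  | m + 1 => f m

lemma Lp_nonneg (m : ℕ) {y : ℝ} (hy : y ∈ Ioo (0:ℝ) 1) : 0 ≤ Lp m y := by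
  have := Real.log_neg hy.1 hy.2
  unfold Lp
  have : 0 ≤ -Real.log y := by linarith
  positivity

lemma kerR_nonneg (m n : ℕ) (s : ℝ) {y : ℝ} (hy : y ∈ Ioo (0:ℝ) 1) : 0 ≤ kerR m n s y := by
  have := Lp_nonneg m hy
  have h1 : 0 ≤ 1 - y := by linarith [hy.2]
  have h2 := hy.1.le
  unfold kerR
  positivity

lemma norm_ker (m n : ℕ) (β : ℂ) {y : ℝ} (hy : y ∈ Ioo (0:ℝ) 1) :
    ‖ker m n β y‖ = kerR m n β.re y := by
  have := Lp_nonneg m hy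
  have h1 : 0 ≤ 1 - y := by linarith [hy.2]
  unfold ker kerR
  rw [norm_mul, Complex.norm_cpow_eq_rpow_re_of_pos hy.1, Complex.norm_real,
    Real.norm_of_nonneg (by positivity)]
  simp

lemma ker_ofReal (m n : ℕ) (s : ℝ) {y : ℝ} (hy : y ∈ Ioo (0:ℝ) 1) :
    ker m n (s : ℂ) y = (kerR m n s y : ℂ) := by
  unfold ker kerR
  rw [Complex.ofReal_mul (y ^ (s-1)), Complex.ofReal_cpow hy.1.le]
  push_cast
  rfl

lemma Lp_le (m : ℕ) {ε : ℝ} (hε : 0 < ε) {y : ℝ} (hy : y ∈ Ioo (0:ℝ) 1) :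
    Lp m y ≤ (ε⁻¹) ^ m * y ^ (-ε) := by
  have hl := Real.log_neg hy.1 hy.2
  have h := Real.pow_div_factorial_le_exp (ε * (-Real.log y)) (by nlinarith) m
  have e : Real.exp (ε * (-Real.log y)) = y ^ (-ε) := by
    rw [Real.rpow_def_of_pos hy.1]; ring_nf
  rw [e, mul_pow, mul_div_assoc] at h
  unfold Lp
  have : 0 < ε ^ m := by positivity
  rw [inv_pow, inv_mul_eq_div, le_div_iff₀ this]
  linarith

lemma kerR_le (m n : ℕ) {s : ℝ} (hs : 0 < s) {y : ℝ} (hy : y ∈ Ioo (0:ℝ) 1) :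
    kerR m n s y ≤ ((s/2)⁻¹) ^ m * y ^ (s/2 - 1) := by
  have h := Lp_le m (half_pos hs) hy
  have h0 := Lp_nonneg m hy
  have h1 : (1 - y) ^ n ≤ 1 := pow_le_one₀ (by linarith [hy.2]) (by linarith [hy.1])
  have h2 : 0 < y ^ (s-1) := Real.rpow_pos_of_pos hy.1 _
  have e : y ^ (s/2 - 1) = y ^ (s-1) * y ^ (-(s/2)) := by
    rw [← Real.rpow_add hy.1]; ring_nf
  unfold kerR
  rw [e]
  calc y ^ (s-1) * ((1 - y) ^ n * Lp m y) ≤ y ^ (s-1) * (1 * Lp m y) := by gcongr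
    _ ≤ y ^ (s-1) * (1 * (((s/2)⁻¹) ^ m * y ^ (-(s/2)))) := by gcongr
    _ = _ := by ring

lemma contOn_ker (m n : ℕ) (β : ℂ) : ContinuousOn (ker m n β) (Ioo (0:ℝ) 1) := by
  unfold ker Lp
  apply ContinuousOn.mul
  · intro y hy
    apply ContinuousAt.continuousWithinAt
    exact (continuousAt_cpow_const (Or.inl (by simpa using hy.1))).comp
      Complex.continuous_ofReal.continuousAt
  · apply Complex.continuous_ofReal.comp_continuousOn
    apply ContinuousOn.mul (by fun_prop)
    apply ContinuousOn.div_const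
    apply ContinuousOn.pow
    apply ContinuousOn.neg
    exact Real.continuousOn_log.mono (fun y hy => ne_of_gt hy.1)

lemma contOn_kerR (m n : ℕ) (s : ℝ) : ContinuousOn (kerR m n s) (Ioo (0:ℝ) 1) := by
  have := (contOn_ker m n s).norm
  refine this.congr fun y hy => ?_
  simp [norm_ker m n _ hy]

lemma int_bound {s : ℝ} (hs : 0 < s) (C : ℝ) :
    IntegrableOn (fun y : ℝ => C * y ^ (s/2 - 1)) (Ioo (0:ℝ) 1) := by
  have h := intervalIntegral.intervalIntegrable_rpow' (a := 0) (b := 1) (r := s/2-1) (by linarith)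
  rw [intervalIntegrable_iff_integrableOn_Ioo_of_le zero_le_one] at h
  exact h.const_mul C

lemma int_kerR (m n : ℕ) {s : ℝ} (hs : 0 < s) : IntegrableOn (kerR m n s) (Ioo (0:ℝ) 1) := by
  refine Integrable.mono' (int_bound hs (((s/2)⁻¹) ^ m))
    ((contOn_kerR m n s).aestronglyMeasurable measurableSet_Ioo) ?_
  refine (ae_restrict_iff' measurableSet_Ioo).2 (Eventually.of_forall fun y hy => ?_)
  rw [Real.norm_of_nonneg (kerR_nonneg m n s hy)]
  exact kerR_le m n hs hy

lemma int_ker (m n : ℕ) {β : ℂ} (hs : 0 < β.re) : IntegrableOn (ker m n β) (Ioo (0:ℝ) 1) := by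
  refine Integrable.mono' (int_kerR m n hs)
    ((contOn_ker m n β).aestronglyMeasurable measurableSet_Ioo) ?_
  refine (ae_restrict_iff' measurableSet_Ioo).2 (Eventually.of_forall fun y hy => ?_)
  rw [norm_ker m n β hy]

lemma int_norm_ker (m n : ℕ) (β : ℂ) : ∫ y in Ioo (0:ℝ) 1, ‖ker m n β y‖ = BB m n β.re :=
  setIntegral_congr_fun measurableSet_Ioo fun _ hy => norm_ker m n β hy

lemma norm_bb_le (m n : ℕ) (β : ℂ) : ‖bb m n β‖ ≤ BB m n β.re := by
  rw [← int_norm_ker]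
  exact norm_integral_le_integral_norm _

lemma BB_nonneg (m n : ℕ) (s : ℝ) : 0 ≤ BB m n s :=
  setIntegral_nonneg measurableSet_Ioo fun _ hy => kerR_nonneg m n s hy

lemma bb_ofReal (m n : ℕ) (s : ℝ) : bb m n (s : ℂ) = (BB m n s : ℂ) := by
  unfold bb BB
  rw [← integral_complex_ofReal]
  exact setIntegral_congr_fun measurableSet_Ioo fun _ hy => ker_ofReal m n s hy

lemma bb_split (m n : ℕ) {β : ℂ} (hβ : 0 < β.re) :
    bb m n β = bb m (n+1) β + bb m n (β+1) := by
  unfold bb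
  rw [← integral_add (int_ker m (n+1) hβ) (int_ker m n (by simp; linarith))]
  refine setIntegral_congr_fun measurableSet_Ioo fun y hy => ?_
  have hy0 : (y : ℂ) ≠ 0 := by exact_mod_cast hy.1.ne'
  have : (y : ℂ) ^ (β + 1 - 1) = (y : ℂ) ^ (β - 1) * y := by
    rw [show β + 1 - 1 = (β - 1) + 1 by ring, Complex.cpow_add _ _ hy0, Complex.cpow_one]
  simp only [ker, this]
  push_cast
  ring

lemma bb_tendsto_n (m : ℕ) {β : ℂ} (hβ : 0 < β.re) :
    Tendsto (fun n => bb m n β) atTop (𝓝 0) := by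
  have : (0:ℂ) = ∫ y in Ioo (0:ℝ) 1, (0:ℂ) := by simp
  rw [this]
  refine tendsto_integral_of_dominated_convergence (kerR m 0 β.re)
    (fun n => (int_ker m n hβ).aestronglyMeasurable) (int_kerR m 0 hβ) (fun n => ?_) ?_
  · refine (ae_restrict_iff' measurableSet_Ioo).2 (Eventually.of_forall fun y hy => ?_)
    rw [norm_ker m n β hy]
    unfold kerR
    have h0 := Lp_nonneg m hy
    have h1 : (1 - y) ^ n ≤ 1 := pow_le_one₀ (by linarith [hy.2]) (by linarith [hy.1])
    have h2 : 0 < y ^ (β.re-1) := Real.rpow_pos_of_pos hy.1 _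
    rw [pow_zero]
    gcongr
  · refine (ae_restrict_iff' measurableSet_Ioo).2 (Eventually.of_forall fun y hy => ?_)
    have h := tendsto_pow_atTop_nhds_zero_of_lt_one (r := 1 - y) (by linarith [hy.2])
      (by linarith [hy.1])
    have h2 : Tendsto (fun n : ℕ => (y : ℂ) ^ (β - 1) * (((1 - y) ^ n * Lp m y : ℝ) : ℂ)) atTop
        (𝓝 ((y : ℂ) ^ (β - 1) * ((0 * Lp m y : ℝ) : ℂ))) :=
      ((Complex.continuous_ofReal.tendsto _).comp (h.mul_const _)).const_mul _
    simpa [ker] using h2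

lemma bb_tendsto_b (m n : ℕ) {β : ℂ} (hβ : 0 < β.re) :
    Tendsto (fun j : ℕ => bb m n (β + j)) atTop (𝓝 0) := by
  have : (0:ℂ) = ∫ y in Ioo (0:ℝ) 1, (0:ℂ) := by simp
  rw [this]
  have key : ∀ j : ℕ, ∀ y ∈ Ioo (0:ℝ) 1, ker m n (β + j) y = (y:ℂ) ^ j * ker m n β y := by
    intro j y hy
    have hy0 : (y : ℂ) ≠ 0 := by exact_mod_cast hy.1.ne'
    have : (y : ℂ) ^ (β + j - 1) = (y : ℂ) ^ (β - 1) * y ^ j := by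
      rw [show β + j - 1 = (β - 1) + j by ring, Complex.cpow_add _ _ hy0, Complex.cpow_natCast]
    simp only [ker, this]; ring
  refine tendsto_integral_of_dominated_convergence (kerR m n β.re)
    (fun j => (int_ker m n (by simp; positivity)).aestronglyMeasurable)
    (int_kerR m n hβ) (fun j => ?_) ?_
  · refine (ae_restrict_iff' measurableSet_Ioo).2 (Eventually.of_forall fun y hy => ?_)
    rw [key j y hy, norm_mul, norm_ker m n β hy, norm_pow, Complex.norm_real,
      Real.norm_of_nonneg hy.1.le]
    have := kerR_nonneg m n β.re hy
    have h1 : y ^ j ≤ 1 := pow_le_one₀ hy.1.le hy.2.le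
    nlinarith
  · refine (ae_restrict_iff' measurableSet_Ioo).2 (Eventually.of_forall fun y hy => ?_)
    have h := tendsto_pow_atTop_nhds_zero_of_norm_lt_one (x := (y:ℂ))
      (by rw [Complex.norm_real, Real.norm_of_nonneg hy.1.le]; exact hy.2)
    have h2 := h.mul_const (ker m n β y)
    rw [zero_mul] at h2
    exact h2.congr fun j => (key j y hy).symm

lemma hasDeriv_Lp (m : ℕ) {y : ℝ} (hy : y ∈ Ioo (0:ℝ) 1) :
    HasDerivAt (Lp m) (-(prv (fun i => Lp i y) m / y)) y := by
  have hl := (Real.hasDerivAt_log hy.1.ne').neg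
  cases m with
  | zero =>
    have : Lp 0 = fun _ => 1 := by funext y; simp [Lp]
    rw [this]; simpa [prv] using hasDerivAt_const y (1:ℝ)
  | succ m =>
    have h := (hl.pow (m+1)).div_const ((m+1).factorial : ℝ)
    refine h.congr_deriv ?_
    simp only [prv, Lp, Nat.factorial_succ, Pi.neg_apply]
    have : (m.factorial : ℝ) ≠ 0 := by positivity
    have := hy.1.ne'
    push_cast
    field_simp

/-- Integration by parts, general form. -/
lemma bb_parts (m n : ℕ) {β : ℂ} (hβ : 0 < β.re) :
    β * bb m n β = prv (fun i => bb i n β) m + n * bb m (n-1) (β+1)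
      + (if m = 0 ∧ n = 0 then 1 else 0) := by
  set F : ℝ → ℂ := fun y => (y:ℂ) ^ β * (((1 - y) ^ n * Lp m y : ℝ) : ℂ) with hF
  set F' : ℝ → ℂ := fun y => β * ker m n β y - prv (fun i => ker i n β y) m
      - n * ker m (n-1) (β+1) y with hF'
  have hβ1 : 0 < (β+1).re := by simp; linarith
  have hprvint : IntegrableOn (fun y => prv (fun i => ker i n β y) m) (Ioo (0:ℝ) 1) := by
    cases m with
    | zero => simp [prv]
    | succ m => exact int_ker m n hβ
  have hprv : ∫ y in Ioo (0:ℝ) 1, prv (fun i => ker i n β y) m = prv (fun i => bb i n β) m := by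
    cases m with
    | zero => simp [prv]
    | succ m => rfl
  have hder : ∀ y ∈ Ioo (0:ℝ) 1, HasDerivAt F (F' y) y := by
    intro y hy
    have hy0 : (y : ℂ) ≠ 0 := by exact_mod_cast hy.1.ne'
    have h1 : HasDerivAt (fun y : ℝ => (y:ℂ) ^ β) (β * (y:ℂ) ^ (β - 1)) y := by
      have := (hasDerivAt_id (y:ℂ)).cpow_const (c := β) (Or.inl (by simpa using hy.1))
      simpa using this.comp_ofReal
    have h2 : HasDerivAt (fun y : ℝ => (1 - y) ^ n) (n * (1-y)^(n-1) * (-1)) y := by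
      exact ((hasDerivAt_id y).const_sub 1).pow n
    have h3 := (h2.mul (hasDeriv_Lp m hy)).ofReal_comp
    refine (h1.mul h3).congr_deriv ?_
    have e1 : (y : ℂ) ^ (β + 1 - 1) = (y : ℂ) ^ (β - 1) * y := by
      rw [show β + 1 - 1 = (β - 1) + 1 by ring, Complex.cpow_add _ _ hy0, Complex.cpow_one]
    have e2 : (y : ℂ) ^ β = (y : ℂ) ^ (β - 1) * y := by
      rw [← e1]; ring_nf
    have e3 : prv (fun i => ker i n β y) m
        = (y:ℂ)^(β-1) * (((1-y)^n * prv (fun i => Lp i y) m : ℝ) : ℂ) := by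
      cases m <;> simp [prv, ker]
    rw [hF']
    simp only [e3]
    simp only [e2, ker, e1, Pi.mul_apply]
    push_cast
    field_simp
    ring
  have hIntg1 : IntegrableOn (fun y => β * ker m n β y - prv (fun i => ker i n β y) m)
      (Ioo (0:ℝ) 1) := ((int_ker m n hβ).const_mul β).sub hprvint
  have hIntg : IntegrableOn F' (Ioo (0:ℝ) 1) := hIntg1.sub ((int_ker m (n-1) hβ1).const_mul n)
  have h0 : Tendsto F (𝓝[>] 0) (𝓝 0) := by
    have hb : Tendsto (fun y : ℝ => ((β.re/2)⁻¹) ^ m * y ^ (β.re/2)) (𝓝[>] 0) (𝓝 0) := by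
      have : Tendsto (fun y : ℝ => y ^ (β.re/2)) (𝓝 0) (𝓝 (0 ^ (β.re/2))) :=
        (Real.continuousAt_rpow_const 0 _ (Or.inr (by positivity))).tendsto
      rw [Real.zero_rpow (by positivity)] at this
      simpa using (this.mono_left nhdsWithin_le_nhds).const_mul (((β.re/2)⁻¹) ^ m)
    refine squeeze_zero_norm' ?_ hb
    filter_upwards [Ioo_mem_nhdsGT (zero_lt_one (α := ℝ))] with y hy
    have hy0 : (y : ℂ) ≠ 0 := by exact_mod_cast hy.1.ne'
    have e : F y = y * ker m n β y := by
      simp only [hF, ker]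
      rw [Complex.cpow_sub _ _ hy0, Complex.cpow_one]; field_simp
    rw [e, norm_mul, norm_ker m n β hy, Complex.norm_real, Real.norm_of_nonneg hy.1.le]
    have := kerR_le m n hβ hy
    have e2 : y ^ (β.re/2) = y * y ^ (β.re/2 - 1) := by
      rw [Real.rpow_sub hy.1, Real.rpow_one]; field_simp [hy.1.ne']
    rw [e2]
    nlinarith [hy.1]
  have h1 : Tendsto F (𝓝[<] 1) (𝓝 (if m = 0 ∧ n = 0 then 1 else 0)) := by
    have hc : ContinuousAt F 1 := by
      simp only [hF, Lp]
      apply ContinuousAt.mul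
      · exact (continuousAt_cpow_const (Or.inl (by simp))).comp
          Complex.continuous_ofReal.continuousAt
      · apply Complex.continuous_ofReal.continuousAt.comp
        apply ContinuousAt.mul (by fun_prop)
        apply ContinuousAt.div_const
        apply ContinuousAt.pow
        exact (Real.continuousAt_log one_ne_zero).neg
    have hv : F 1 = (if m = 0 ∧ n = 0 then 1 else 0) := by
      simp only [hF, Lp]
      rcases m with _ | m <;> rcases n with _ | n <;> simp
    rw [← hv]
    exact hc.tendsto.mono_left nhdsWithin_le_nhds
  have hfin := intervalIntegral.integral_eq_sub_of_hasDerivAt_of_tendsto zero_lt_one hder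
    ((intervalIntegrable_iff_integrableOn_Ioo_of_le zero_le_one).2 hIntg) h0 h1
  rw [intervalIntegral.integral_of_le zero_le_one, integral_Ioc_eq_integral_Ioo] at hfin
  have hsplit : ∫ y in Ioo (0:ℝ) 1, F' y = β * bb m n β - prv (fun i => bb i n β) m
      - n * bb m (n-1) (β+1) := by
    simp only [hF']
    rw [integral_sub hIntg1
      ((int_ker m (n-1) hβ1).const_mul n), integral_sub ((int_ker m n hβ).const_mul β) hprvint,
      integral_const_mul, integral_const_mul, hprv]
    rfl
  rw [hsplit] at hfin
  linear_combination hfin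

end Pf
namespace Pf

open Set Filter Topology

lemma BB_split (m n : ℕ) {s : ℝ} (hs : 0 < s) :
    BB m n s = BB m (n+1) s + BB m n (s+1) := by
  have h := bb_split m n (β := (s:ℂ)) (by simpa using hs)
  rw [← Complex.ofReal_one, ← Complex.ofReal_add] at h
  simp only [bb_ofReal] at h
  exact_mod_cast h

lemma prv_ofReal (f : ℕ → ℝ) (m : ℕ) : prv (fun i => (f i : ℂ)) m = (prv f m : ℝ) := by
  cases m <;> simp [prv]

lemma BB_parts (m n : ℕ) {s : ℝ} (hs : 0 < s) :
    s * BB m n s = prv (fun i => BB i n s) m + n * BB m (n-1) (s+1)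
      + (if m = 0 ∧ n = 0 then 1 else 0) := by
  have h := bb_parts m n (β := (s:ℂ)) (by simpa using hs)
  rw [← Complex.ofReal_one, ← Complex.ofReal_add] at h
  simp only [bb_ofReal, prv_ofReal] at h
  split_ifs at h ⊢ <;> exact_mod_cast h

lemma tele {E : Type*} [AddCommGroup E] [TopologicalSpace E] [IsTopologicalAddGroup E]
    {f : ℕ → E} (hf : Tendsto f atTop (𝓝 0)) :
    Tendsto (fun n => ∑ i ∈ Finset.range n, (f i - f (i+1))) atTop (𝓝 (f 0)) := by
  simp only [Finset.sum_range_sub']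
  simpa using hf.const_sub (f 0)

lemma BB_tendsto_n (m : ℕ) {s : ℝ} (hs : 0 < s) :
    Tendsto (fun n => BB m n s) atTop (𝓝 0) := by
  have h := bb_tendsto_n m (β := (s:ℂ)) (by simpa using hs)
  simp only [bb_ofReal] at h
  simpa [Function.comp_def] using (Complex.continuous_re.tendsto _).comp h

lemma BB_tendsto_b (m n : ℕ) {s : ℝ} (hs : 0 < s) :
    Tendsto (fun j : ℕ => BB m n (s + j)) atTop (𝓝 0) := by
  have h := bb_tendsto_b m n (β := (s:ℂ)) (by simpa using hs)
  have e : ∀ j : ℕ, bb m n ((s:ℂ) + j) = (BB m n (s + j) : ℝ) := by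
    intro j; rw [← bb_ofReal]; push_cast; rfl
  simp only [e] at h
  simpa [Function.comp_def] using (Complex.continuous_re.tendsto _).comp h

lemma T1R (m n : ℕ) {s : ℝ} (hs : 0 < s) :
    HasSum (fun j : ℕ => BB m (n+1) (s+j)) (BB m n s) := by
  rw [hasSum_iff_tendsto_nat_of_nonneg (fun _ => BB_nonneg _ _ _)]
  have h := tele (BB_tendsto_b m n hs)
  simp only [Nat.cast_zero, add_zero] at h
  refine h.congr fun N => Finset.sum_congr rfl fun j _ => ?_
  have := BB_split m n (s := s + j) (by positivity)
  push_cast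
  rw [← add_assoc]
  linarith

lemma T2R (m l : ℕ) {s : ℝ} (hs : 0 < s) :
    HasSum (fun i : ℕ => BB m (l+i) (s+1)) (BB m l s) := by
  rw [hasSum_iff_tendsto_nat_of_nonneg (fun _ => BB_nonneg _ _ _)]
  have h := tele (f := fun i => BB m (l+i) s)
    ((BB_tendsto_n m hs).comp (tendsto_atTop_mono (fun i => Nat.le_add_left i l) tendsto_id))
  simp only [add_zero] at h
  refine h.congr fun N => Finset.sum_congr rfl fun j _ => ?_
  have := BB_split m (l+j) hs
  rw [← add_assoc]
  linarith

lemma T1C (m n : ℕ) {β : ℂ} (hβ : 0 < β.re) :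
    HasSum (fun j : ℕ => bb m (n+1) (β+j)) (bb m n β) := by
  have hs : Summable (fun j : ℕ => bb m (n+1) (β+j)) := by
    refine Summable.of_norm_bounded (T1R m n hβ).summable fun j => ?_
    simpa using norm_bb_le m (n+1) (β+j)
  rw [hs.hasSum_iff_tendsto_nat]
  have h := tele (bb_tendsto_b m n hβ)
  simp only [Nat.cast_zero, add_zero] at h
  refine h.congr fun N => Finset.sum_congr rfl fun j _ => ?_
  have := bb_split m n (β := β + j) (by simp; positivity)
  push_cast
  rw [← add_assoc]
  linear_combination this

lemma T2C (m l : ℕ) {β : ℂ} (hβ : 0 < β.re) :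
    HasSum (fun i : ℕ => bb m (l+i) (β+1)) (bb m l β) := by
  have hs : Summable (fun i : ℕ => bb m (l+i) (β+1)) := by
    refine Summable.of_norm_bounded (T2R m l hβ).summable fun j => ?_
    simpa using norm_bb_le m (l+j) (β+1)
  rw [hs.hasSum_iff_tendsto_nat]
  have h := tele (f := fun i => bb m (l+i) β)
    ((bb_tendsto_n m hβ).comp (tendsto_atTop_mono (fun i => Nat.le_add_left i l) tendsto_id))
  simp only [add_zero] at h
  refine h.congr fun N => Finset.sum_congr rfl fun j _ => ?_
  have := bb_split m (l+j) hβ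
  rw [← add_assoc]
  linear_combination this

/-- Coefficient sequences for which all the series converge. -/
structure Good (c : ℕ → ℝ) : Prop where
  nn : ∀ n, 0 ≤ c n
  le1 : ∀ n, c n ≤ 1
  sm : ∀ m s, 0 < s → Summable (fun n => c n * BB m n s)

noncomputable def c0 (c : ℕ → ℝ) (n : ℕ) : ℝ := c n / n
noncomputable def c1 (c : ℕ → ℝ) (n : ℕ) : ℝ := (∑ l ∈ Finset.range n, c l) / n

noncomputable def Jc (c : ℕ → ℝ) (m : ℕ) (β : ℂ) : ℂ := ∑' n, (c n : ℂ) * bb m n β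

lemma norm_cb {c : ℕ → ℝ} (hc : ∀ n, 0 ≤ c n) (m n l : ℕ) (β : ℂ) :
    ‖(c l : ℂ) * bb m n β‖ ≤ c l * BB m n β.re := by
  rw [norm_mul, Complex.norm_real, Real.norm_of_nonneg (hc l)]
  exact mul_le_mul_of_nonneg_left (norm_bb_le m n β) (hc l)

lemma Good.smC {c : ℕ → ℝ} (hc : Good c) (m : ℕ) {β : ℂ} (hβ : 0 < β.re) :
    Summable (fun n => (c n : ℂ) * bb m n β) :=
  Summable.of_norm_bounded (hc.sm m β.re hβ) fun n => norm_cb hc.nn m n n β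

lemma dbl {c S : ℕ → ℝ} (hc : ∀ n, 0 ≤ c n) {u : ℕ → ℕ → ℂ} {U : ℕ → ℕ → ℝ}
    (hu : ∀ l i, ‖u l i‖ ≤ U l i) (hU : ∀ l, HasSum (fun i => c l * U l i) (S l))
    (hS : Summable S) : Summable (fun p : ℕ × ℕ => (c p.1 : ℂ) * u p.1 p.2) := by
  have h : Summable (fun p : ℕ × ℕ => c p.1 * U p.1 p.2) := by
    rw [summable_prod_of_nonneg]
    · refine ⟨fun l => (hU l).summable, ?_⟩
      simp only [fun l => (hU l).tsum_eq]
      exact hS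
    · intro p
      exact mul_nonneg (hc _) ((norm_nonneg _).trans (hu _ _))
  refine Summable.of_norm_bounded h fun p => ?_
  rw [norm_mul, Complex.norm_real, Real.norm_of_nonneg (hc _)]
  exact mul_le_mul_of_nonneg_left (hu _ _) (hc _)

lemma Good.smPred {c : ℕ → ℝ} (hc : Good c) (h0 : c 0 = 0) (m : ℕ) {s : ℝ} (hs : 0 < s) :
    Summable (fun n => c n * BB m (n-1) s) := by
  refine Summable.of_nonneg_of_le (fun n => mul_nonneg (hc.nn n) (BB_nonneg _ _ _)) ?_
    ((hc.sm m s hs).mul_left (1+s))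
  intro n
  cases n with
  | zero => simp [h0]
  | succ n =>
    have h1 := BB_split m n hs
    have h2 := BB_parts m (n+1) hs
    simp only [Nat.succ_ne_zero, and_false, if_false, add_zero, Nat.add_sub_cancel] at h2 ⊢
    have h3 : 0 ≤ prv (fun i => BB i (n+1) s) m := by
      cases m <;> simp [prv, BB_nonneg]
    have h4 := BB_nonneg m n (s+1)
    push_cast at h2
    have h5 : BB m n (s+1) ≤ s * BB m (n+1) s := by
      have : 0 ≤ (n:ℝ) * BB m n (s+1) := by positivity
      nlinarith
    have h6 : BB m n s ≤ (1+s) * BB m (n+1) s := by linarith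
    have := mul_le_mul_of_nonneg_left h6 (hc.nn (n+1))
    linarith

lemma Good.smPredC {c : ℕ → ℝ} (hc : Good c) (h0 : c 0 = 0) (m : ℕ) {β : ℂ} (hβ : 0 < β.re) :
    Summable (fun n => (c n : ℂ) * bb m (n-1) β) :=
  Summable.of_norm_bounded (hc.smPred h0 m hβ) fun n => norm_cb hc.nn m _ n β

lemma Good.shift {c : ℕ → ℝ} (hc : Good c) (h0 : c 0 = 0) (m : ℕ) {β : ℂ} (hβ : 0 < β.re) :
    HasSum (fun j : ℕ => Jc c m (β + j)) (∑' n, (c n : ℂ) * bb m (n-1) β) := by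
  have hsm : Summable (fun p : ℕ × ℕ => (c p.1 : ℂ) * bb m p.1 (β + p.2)) := by
    refine dbl (u := fun n j => bb m n (β + j)) (U := fun n j => BB m n (β.re + j)) hc.nn
      (S := fun n => c n * BB m (n-1) β.re) ?_ ?_ (hc.smPred h0 m hβ)
    · intro l i
      simpa using norm_bb_le m l (β + i)
    · intro l
      cases l with
      | zero => simp [h0]
      | succ l => exact (T1R m l hβ).mul_left _
  have hs1 := hsm.hasSum
  have h2 : HasSum (fun n => (c n : ℂ) * bb m (n-1) β) (∑' p : ℕ × ℕ, (c p.1 : ℂ) * bb m p.1 (β + p.2)) := by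
    refine hs1.prod_fiberwise fun l => ?_
    cases l with
    | zero => simp [h0]
    | succ l => exact (T1C m l hβ).mul_left _
  rw [h2.tsum_eq]
  have hs2 := (Equiv.prodComm ℕ ℕ).hasSum_iff.2 hs1
  refine hs2.prod_fiberwise fun j => ?_
  exact (hc.smC m (β := β + j) (by simp; positivity)).hasSum

lemma Good.conv {c : ℕ → ℝ} (hc : Good c) (m : ℕ) {β : ℂ} (hβ : 0 < β.re) :
    HasSum (fun n : ℕ => ((∑ l ∈ Finset.range (n+1), c l : ℝ) : ℂ) * bb m n (β+1)) (Jc c m β) := by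
  have hsm : Summable (fun p : ℕ × ℕ => (c p.1 : ℂ) * bb m (p.1 + p.2) (β + 1)) := by
    refine dbl (u := fun l i => bb m (l+i) (β + 1)) (U := fun l i => BB m (l+i) (β.re + 1)) hc.nn
      (S := fun n => c n * BB m n β.re) ?_ ?_ (hc.sm m _ hβ)
    · intro l i
      simpa using norm_bb_le m (l+i) (β + 1)
    · intro l
      exact (T2R m l hβ).mul_left _
  have hs1 := hsm.hasSum
  have h2 : HasSum (fun n => (c n : ℂ) * bb m n β)
      (∑' p : ℕ × ℕ, (c p.1 : ℂ) * bb m (p.1 + p.2) (β + 1)) :=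
    hs1.prod_fiberwise fun l => (T2C m l hβ).mul_left _
  unfold Jc
  rw [h2.tsum_eq]
  have hs2 := (Finset.HasAntidiagonal.sigmaAntidiagonalEquivProd (A := ℕ)).hasSum_iff.2 hs1
  refine hs2.sigma fun n => ?_
  have := hasSum_fintype (fun p : Finset.HasAntidiagonal.antidiagonal n =>
    (c p.1.1 : ℂ) * bb m (p.1.1 + p.1.2) (β + 1))
  convert this using 1
  · rfl
  rw [Finset.sum_coe_sort (Finset.HasAntidiagonal.antidiagonal n)
    (fun p => (c p.1 : ℂ) * bb m (p.1 + p.2) (β + 1))]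
  rw [Finset.Nat.sum_antidiagonal_eq_sum_range_succ
    (fun i j => (c i : ℂ) * bb m (i + j) (β + 1))]
  push_cast
  rw [Finset.sum_mul]
  refine Finset.sum_congr rfl fun i hi => ?_
  rw [Nat.add_sub_cancel' (by simpa [Nat.lt_succ_iff] using hi)]

lemma Good.convR {c : ℕ → ℝ} (hc : Good c) (m : ℕ) {s : ℝ} (hs : 0 < s) :
    Summable (fun n : ℕ => (∑ l ∈ Finset.range (n+1), c l : ℝ) * BB m n (s+1)) := by
  have h := (hc.conv m (β := (s:ℂ)) (by simpa using hs)).summable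
  rw [← Complex.ofReal_one, ← Complex.ofReal_add] at h
  simp only [bb_ofReal, ← Complex.ofReal_mul] at h
  exact Complex.summable_ofReal.1 h

lemma c1_term (c : ℕ → ℝ) (m n : ℕ) {β : ℂ} (hβ : 0 < β.re) :
    β * ((c1 c n : ℂ) * bb m n β) = prv (fun i => (c1 c n : ℂ) * bb i n β) m
      + ((∑ l ∈ Finset.range n, c l : ℝ) : ℂ) * bb m (n-1) (β+1) := by
  cases n with
  | zero => cases m <;> simp [c1, prv]
  | succ n =>
    have h := bb_parts m (n+1) hβ
    simp only [Nat.succ_ne_zero, and_false, if_false, add_zero, Nat.add_sub_cancel] at h ⊢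
    have e : prv (fun i => (c1 c (n+1) : ℂ) * bb i (n+1) β) m
        = (c1 c (n+1) : ℂ) * prv (fun i => bb i (n+1) β) m := by
      cases m <;> simp [prv]
    have e2 : ((∑ l ∈ Finset.range (n+1), c l : ℝ) : ℂ) = (c1 c (n+1) : ℂ) * ((n+1 : ℕ) : ℂ) := by
      unfold c1
      have : ((n+1 : ℕ) : ℂ) ≠ 0 := by exact_mod_cast Nat.succ_ne_zero n
      rw [Complex.ofReal_div, Complex.ofReal_natCast]
      field_simp
    rw [e, e2]
    linear_combination (c1 c (n+1) : ℂ) * h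

lemma c0_term {c : ℕ → ℝ} (h0 : c 0 = 0) (m n : ℕ) {β : ℂ} (hβ : 0 < β.re) :
    β * ((c0 c n : ℂ) * bb m n β) = prv (fun i => (c0 c n : ℂ) * bb i n β) m
      + (c n : ℂ) * bb m (n-1) (β+1) := by
  cases n with
  | zero => cases m <;> simp [c0, prv, h0]
  | succ n =>
    have h := bb_parts m (n+1) hβ
    simp only [Nat.succ_ne_zero, and_false, if_false, add_zero, Nat.add_sub_cancel] at h ⊢
    have e : prv (fun i => (c0 c (n+1) : ℂ) * bb i (n+1) β) m
        = (c0 c (n+1) : ℂ) * prv (fun i => bb i (n+1) β) m := by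
      cases m <;> simp [prv]
    have e2 : (c (n+1) : ℂ) = (c0 c (n+1) : ℂ) * ((n+1 : ℕ) : ℂ) := by
      unfold c0
      have : ((n+1 : ℕ) : ℂ) ≠ 0 := by exact_mod_cast Nat.succ_ne_zero n
      rw [Complex.ofReal_div, Complex.ofReal_natCast]
      field_simp
    rw [e, e2]
    linear_combination (c0 c (n+1) : ℂ) * h

lemma c1_nn {c : ℕ → ℝ} (hc : Good c) (n : ℕ) : 0 ≤ c1 c n :=
  div_nonneg (Finset.sum_nonneg fun l _ => hc.nn l) (Nat.cast_nonneg _)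

lemma Good.c1 {c : ℕ → ℝ} (hc : Good c) : Good (c1 c) := by
  refine ⟨c1_nn hc, fun n => ?_, fun m => ?_⟩
  · unfold Pf.c1
    rcases Nat.eq_zero_or_pos n with rfl | hn
    · simp
    · have hn' : (0:ℝ) < n := by exact_mod_cast hn
      rw [div_le_one hn']
      have := Finset.sum_le_card_nsmul (Finset.range n) c 1 (fun l _ => hc.le1 l)
      simpa using this
  · induction m with
    | zero =>
      intro s hs
      have h := hc.convR 0 hs
      have h2 : Summable (fun n => (∑ l ∈ Finset.range n, c l : ℝ) * BB 0 (n-1) (s+1)) :=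
        (summable_nat_add_iff 1).1 (by simpa using h)
      refine (h2.mul_left s⁻¹).congr fun n => ?_
      have := c1_term c 0 n (β := (s:ℂ)) (by simpa using hs)
      rw [← Complex.ofReal_one, ← Complex.ofReal_add] at this
      simp only [bb_ofReal, prv, zero_add] at this
      have h3 : s * (Pf.c1 c n * BB 0 n s) = (∑ l ∈ Finset.range n, c l : ℝ) * BB 0 (n-1) (s+1) := by
        exact_mod_cast this
      rw [← h3]; field_simp
    | succ m ih =>
      intro s hs
      have h := hc.convR (m+1) hs
      have h2 : Summable (fun n => (∑ l ∈ Finset.range n, c l : ℝ) * BB (m+1) (n-1) (s+1)) :=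
        (summable_nat_add_iff 1).1 (by simpa using h)
      refine (((ih s hs).add h2).mul_left s⁻¹).congr fun n => ?_
      have := c1_term c (m+1) n (β := (s:ℂ)) (by simpa using hs)
      rw [← Complex.ofReal_one, ← Complex.ofReal_add] at this
      simp only [bb_ofReal, prv] at this
      have h3 : s * (Pf.c1 c n * BB (m+1) n s) = Pf.c1 c n * BB m n s +
          (∑ l ∈ Finset.range n, c l : ℝ) * BB (m+1) (n-1) (s+1) := by
        exact_mod_cast this
      rw [← h3]; field_simp

lemma c0_le {c : ℕ → ℝ} (hc : Good c) (n : ℕ) : c0 c n ≤ c n := by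
  unfold c0
  rcases Nat.eq_zero_or_pos n with rfl | hn
  · simpa using hc.nn 0
  · exact div_le_self (hc.nn n) (by exact_mod_cast hn)

lemma Good.c0 {c : ℕ → ℝ} (hc : Good c) : Good (c0 c) := by
  have hn : ∀ n, 0 ≤ Pf.c0 c n := fun n => div_nonneg (hc.nn n) (Nat.cast_nonneg _)
  refine ⟨hn, fun n => (c0_le hc n).trans (hc.le1 n), fun m s hs => ?_⟩
  refine Summable.of_nonneg_of_le (fun n => mul_nonneg (hn n) (BB_nonneg _ _ _)) (fun n => ?_)
    (hc.sm m s hs)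
  exact mul_le_mul_of_nonneg_right (c0_le hc n) (BB_nonneg _ _ _)

lemma prv_hasSum {ι : Type*} {f : ℕ → ι → ℂ} {a : ℕ → ℂ} (h : ∀ m, HasSum (f m) (a m)) (m : ℕ) :
    HasSum (fun n => prv (fun i => f i n) m) (prv a m) := by
  cases m with
  | zero => exact hasSum_zero
  | succ m => exact h m

lemma Good.rec1 {c : ℕ → ℝ} (hc : Good c) (m : ℕ) {β : ℂ} (hβ : 0 < β.re) :
    β * Jc (Pf.c1 c) m β = prv (fun i => Jc (Pf.c1 c) i β) m + Jc c m β := by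
  have h1 := ((hc.c1.smC m hβ).hasSum).mul_left β
  have h2 : HasSum (fun n => ((∑ l ∈ Finset.range n, c l : ℝ) : ℂ) * bb m (n-1) (β+1))
      (Jc c m β) := by
    rw [← hasSum_nat_add_iff' 1]
    simpa using hc.conv m hβ
  have h3 := (prv_hasSum (fun i => (hc.c1.smC i hβ).hasSum) m).add h2
  refine h1.unique ?_
  refine h3.congr_fun ?_
  intro n
  exact c1_term c m n hβ

lemma Good.rec0 {c : ℕ → ℝ} (hc : Good c) (h0 : c 0 = 0) (m : ℕ) {β : ℂ} (hβ : 0 < β.re) :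
    β * Jc (Pf.c0 c) m β = prv (fun i => Jc (Pf.c0 c) i β) m
      + ∑' n, (c n : ℂ) * bb m (n-1) (β+1) := by
  have h1 := ((hc.c0.smC m hβ).hasSum).mul_left β
  have h2 := (hc.smPredC h0 m (β := β+1) (by simp; linarith)).hasSum
  have h3 := (prv_hasSum (fun i => (hc.c0.smC i hβ).hasSum) m).add h2
  refine h1.unique ?_
  refine h3.congr_fun ?_
  intro n
  exact c0_term h0 m n hβ

/-- The coefficient sequence of the empty word. -/
def cnil (n : ℕ) : ℝ := if n = 0 then 1 else 0

lemma good_nil : Good cnil := by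
  refine ⟨fun n => ?_, fun n => ?_, fun m s _ => ?_⟩
  · unfold cnil; split_ifs <;> norm_num
  · unfold cnil; split_ifs <;> norm_num
  · refine summable_of_ne_finset_zero (s := {0}) fun n hn => ?_
    simp [cnil] at hn ⊢
    simp [hn]

lemma Jc_nil (m : ℕ) (β : ℂ) : Jc cnil m β = bb m 0 β := by
  unfold Jc
  rw [tsum_eq_single 0]
  · simp [cnil]
  · intro n hn; simp [cnil, hn]

lemma bb_zero (m : ℕ) {β : ℂ} (hβ : 0 < β.re) : bb m 0 β = (β⁻¹) ^ (m+1) := by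
  have hb : β ≠ 0 := by rintro rfl; simp at hβ
  induction m with
  | zero =>
    have h := bb_parts 0 0 hβ
    simp [prv] at h
    rw [zero_add, pow_one]; exact eq_inv_of_mul_eq_one_right h
  | succ m ih =>
    have h := bb_parts (m+1) 0 hβ
    simp [prv] at h
    rw [ih] at h
    have : bb (m+1) 0 β = β⁻¹ * (β * bb (m+1) 0 β) := by field_simp
    rw [this, h]; ring

/-- Coefficients of the iterated sum attached to a word. -/
noncomputable def cw : List Bool → ℕ → ℝ
  | [] => cnil
  | false :: w => c0 (cw w)
  | true :: w => c1 (cw w)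

lemma good_cw : ∀ w, Good (cw w)
  | [] => good_nil
  | false :: w => (good_cw w).c0
  | true :: w => (good_cw w).c1

lemma cw_zero : ∀ w, w ≠ [] → cw w 0 = 0
  | [], h => absurd rfl h
  | false :: w, _ => by simp [cw, c0]
  | true :: w, _ => by simp [cw, c1]

end Pf
namespace Pf

open Set Filter Topology

noncomputable def gg {K : Type*} [Field K] (e m : ℕ) (β : K) : K :=
  ((e + m - 1).choose m : K) * (β⁻¹) ^ (e + m)

lemma gg_one {K : Type*} [Field K] (m : ℕ) (β : K) : gg 1 m β = (β⁻¹) ^ (m+1) := by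
  simp [gg, add_comm]

lemma gg_rec {K : Type*} [Field K] {e : ℕ} (he : 0 < e) (m : ℕ) {β : K} (hβ : β ≠ 0) :
    β * gg (e+1) m β = prv (fun i => gg (e+1) i β) m + gg e m β := by
  obtain ⟨e, rfl⟩ : ∃ f, e = f + 1 := ⟨e - 1, by omega⟩
  cases m with
  | zero => simp [gg, prv, pow_succ]; field_simp
  | succ m =>
    simp only [gg, prv]
    have h := Nat.choose_succ_succ (e + 1 + m) m
    rw [show e + 1 + 1 + (m+1) - 1 = (e + 1 + m) + 1 by omega,
      show e + 1 + 1 + m - 1 = e + 1 + m by omega,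
      show e + 1 + (m + 1) - 1 = e + 1 + m by omega,
      show e + 1 + 1 + (m+1) = (e + m + 2) + 1 by omega,
      show e + 1 + 1 + m = e + m + 2 by omega,
      show e + 1 + (m + 1) = e + m + 2 by omega]
    have h' : (((e + 1 + m) + 1).choose (m+1) : K) = ((e+1+m).choose m : K)
      + ((e+1+m).choose (m+1) : K) := by
      rw [← Nat.cast_add, ← Nat.succ_eq_add_one, ← Nat.succ_eq_add_one, h]
    rw [h', pow_succ]
    field_simp

/-- Nested summand, smallest variable first. -/
noncomputable def UU {K : Type*} [Field K] :
    (e : ℕ) → (es : List ℕ) → (m : ℕ) → (β : K) → (Fin es.length → ℕ) → K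
  | e, [], m, β, _ => gg e m β
  | e, e' :: es, m, β, d => ∑ p ∈ Finset.HasAntidiagonal.antidiagonal m,
      gg e p.1 β * UU e' es p.2 (β + 1 + ((d 0 : ℕ) : K)) (Fin.tail d)

lemma conv_prv {K : Type*} [Field K] (f g : ℕ → K) (m : ℕ) :
    ∑ p ∈ Finset.HasAntidiagonal.antidiagonal m, prv f p.1 * g p.2
      = prv (fun i => ∑ p ∈ Finset.HasAntidiagonal.antidiagonal i, f p.1 * g p.2) m := by
  cases m with
  | zero => simp [prv]
  | succ m => rw [Finset.Nat.antidiagonal_succ]; simp [prv]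

lemma UU_rec {K : Type*} [Field K] {e : ℕ} (he : 0 < e) : ∀ (es : List ℕ) (m : ℕ) {β : K}
    (_ : β ≠ 0) (d : Fin es.length → ℕ),
    β * UU (e+1) es m β d = prv (fun i => UU (e+1) es i β d) m + UU e es m β d
  | [], m, β, hβ, d => by
    simpa only [UU] using gg_rec he m hβ
  | e' :: es, m, β, hβ, d => by
    simp only [UU]
    rw [← conv_prv (fun i => gg (e+1) i β) (fun i => UU e' es i (β + 1 + ((d 0 : ℕ) : K)) (Fin.tail d)), ← Finset.sum_add_distrib, Finset.mul_sum]
    refine Finset.sum_congr rfl fun p _ => ?_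
    rw [← mul_assoc, gg_rec he _ hβ]; ring

lemma UU_one {K : Type*} [Field K] (e' : ℕ) (es : List ℕ) (m : ℕ) {β : K}
    (hβ : β ≠ 0) (d : Fin (e' :: es).length → ℕ) :
    β * UU 1 (e' :: es) m β d = prv (fun i => UU 1 (e' :: es) i β d) m
      + UU e' es m (β + 1 + ((d 0 : ℕ) : K)) (Fin.tail d) := by
  simp only [UU]
  rw [← conv_prv (fun i => gg 1 i β) (fun i => UU e' es i (β + 1 + ((d 0 : ℕ) : K)) (Fin.tail d)), Finset.mul_sum]
  have h1 : ∀ i, β * gg 1 i β = prv (fun i => gg 1 i β) i + (if i = 0 then 1 else 0) := by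
    intro i
    cases i with
    | zero => simp [gg, prv]; field_simp
    | succ i => simp only [gg_one, prv]; rw [pow_succ]; field_simp; simp
  simp only [← mul_assoc, h1, add_mul, Finset.sum_add_distrib]
  congr 1
  rw [Finset.sum_eq_single (0, m)]
  · simp
  · rintro ⟨i, j⟩ hp hne
    rw [Finset.HasAntidiagonal.mem_antidiagonal] at hp
    rcases Nat.eq_zero_or_pos i with rfl | hi
    · simp at hp; subst hp; exact absurd rfl hne
    · simp [hi.ne']
  · simp

lemma gg_norm (e m : ℕ) {β : ℂ} (hβ : 0 < β.re) : ‖gg e m β‖ ≤ gg e m β.re := by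
  unfold gg
  rw [norm_mul, norm_pow, norm_inv, Complex.norm_natCast]
  have : β.re ≤ ‖β‖ := Complex.re_le_norm β
  gcongr

lemma gg_nonneg (e m : ℕ) {s : ℝ} (hs : 0 < s) : 0 ≤ gg e m s := by
  unfold gg; positivity

lemma UU_nonneg : ∀ (es : List ℕ) (e m : ℕ) {s : ℝ} (_ : 0 < s) (d : Fin es.length → ℕ),
    0 ≤ UU e es m s d
  | [], e, m, s, hs, d => by simpa only [UU] using gg_nonneg e m hs
  | e' :: es, e, m, s, hs, d => by
    simp only [UU]
    exact Finset.sum_nonneg fun p _ => mul_nonneg (gg_nonneg _ _ hs)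
      (UU_nonneg es e' p.2 (by positivity) _)

lemma UU_norm : ∀ (es : List ℕ) (e m : ℕ) {β : ℂ} (_ : 0 < β.re) (d : Fin es.length → ℕ),
    ‖UU e es m β d‖ ≤ UU e es m β.re d
  | [], e, m, β, hs, d => by simpa only [UU] using gg_norm e m hs
  | e' :: es, e, m, β, hs, d => by
    simp only [UU]
    refine (norm_sum_le _ _).trans (Finset.sum_le_sum fun p _ => ?_)
    rw [norm_mul]
    have h1 := UU_norm es e' p.2 (β := β + 1 + ((d 0 : ℕ) : ℂ)) (by simp; positivity) (Fin.tail d)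
    simp only [Complex.add_re, Complex.one_re, Complex.natCast_re] at h1
    exact mul_le_mul (gg_norm e p.1 hs) h1 (norm_nonneg _) (gg_nonneg _ _ hs)

lemma UU_ofReal : ∀ (es : List ℕ) (e m : ℕ) (s : ℝ) (d : Fin es.length → ℕ),
    UU e es m (s : ℂ) d = (UU e es m s d : ℝ)
  | [], e, m, s, d => by simp [UU, gg]
  | e' :: es, e, m, s, d => by
    simp only [UU]
    rw [Complex.ofReal_sum]
    refine Finset.sum_congr rfl fun p _ => ?_
    have := UU_ofReal es e' p.2 (s + 1 + ((d 0 : ℕ) : ℝ)) (Fin.tail d)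
    rw [Complex.ofReal_mul, ← this]
    push_cast
    congr 1
    simp [gg]

/-- Head and tail of the exponent list of a word. -/
def Ehd : List Bool → ℕ
  | [] => 1
  | true :: w => Ehd w + 1
  | false :: _ => 1
def Etl : List Bool → List ℕ
  | [] => []
  | true :: w => Etl w
  | false :: w => Ehd w :: Etl w

lemma Ehd_pos : ∀ w, 0 < Ehd w
  | [] => Nat.one_pos
  | true :: w => Nat.succ_pos _
  | false :: _ => Nat.one_pos

/-- Words admitted: every suffix starting with `false` is followed by something. -/
def Adm : List Bool → Prop
  | [] => True
  | true :: w => Adm w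
  | false :: w => w ≠ [] ∧ Adm w

lemma real_of_complex {ι : Type*} {f : ι → ℝ} {a : ℂ} (h : HasSum (fun i => (f i : ℂ)) a) :
    HasSum f a.re ∧ a = (a.re : ℂ) := by
  have h1 : HasSum f a.re := by simpa using Complex.hasSum_re h
  refine ⟨h1, h.unique (Complex.hasSum_ofReal.2 h1)⟩

lemma hasSum_of_rec {ι : Type*} {u v : ℕ → ι → ℂ} {a b : ℕ → ℂ} {β : ℂ} (hβ : β ≠ 0)
    (hv : ∀ m, HasSum (v m) (b m))
    (hu : ∀ m d, β * u m d = prv (fun i => u i d) m + v m d)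
    (ha : ∀ m, β * a m = prv a m + b m) (m : ℕ) : HasSum (u m) (a m) := by
  have key : ∀ m, HasSum (fun d => prv (fun i => u i d) m) (prv a m) → HasSum (u m) (a m) := by
    intro m h
    have h1 := (h.add (hv m)).mul_left β⁻¹
    rw [← ha m] at h1
    rw [inv_mul_cancel_left₀ hβ] at h1
    refine h1.congr_fun fun d => ?_
    rw [← hu m d, inv_mul_cancel_left₀ hβ]
  induction m with
  | zero => exact key 0 hasSum_zero
  | succ m ih => exact key (m+1) ih

/-- Summability on the product, used both in the recursion and in the final step. -/
lemma prod_sum (w : List Bool) (hw : w ≠ [])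
    (ih : ∀ (m : ℕ) (β : ℂ), 0 < β.re → HasSum (UU (Ehd w) (Etl w) m β) (Jc (cw w) m β))
    (m : ℕ) {β : ℂ} (hβ : 0 < β.re) :
    Summable (fun p : ℕ × (Fin (Etl w).length → ℕ) => UU (Ehd w) (Etl w) m (β.re + p.1) p.2) ∧
    HasSum (fun p : ℕ × (Fin (Etl w).length → ℕ) => UU (Ehd w) (Etl w) m (β + p.1) p.2)
      (∑' n, (cw w n : ℂ) * bb m (n-1) β) := by
  have hR : Summable (fun p : ℕ × (Fin (Etl w).length → ℕ) =>
      UU (Ehd w) (Etl w) m (β.re + p.1) p.2) := by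
    rw [summable_prod_of_nonneg (fun p => UU_nonneg _ _ _ (by positivity) _)]
    have h1 : ∀ j : ℕ, HasSum (fun d => UU (Ehd w) (Etl w) m (β.re + j) d)
        (Jc (cw w) m ((β.re : ℂ) + j)).re := by
      intro j
      have h := ih m ((β.re : ℂ) + j) (by simp; positivity)
      have e : (UU (Ehd w) (Etl w) m ((β.re : ℂ) + j))
          = fun d => ((UU (Ehd w) (Etl w) m (β.re + j) d : ℝ) : ℂ) := by
        funext d
        rw [← UU_ofReal]; push_cast; rfl
      rw [e] at h
      exact (real_of_complex h).1
    refine ⟨fun j => (h1 j).summable, ?_⟩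
    simp only [fun j => (h1 j).tsum_eq]
    have := ((good_cw w).shift (cw_zero w hw) m (β := (β.re : ℂ)) (by simpa using hβ)).summable
    exact (Complex.hasSum_re this.hasSum).summable
  refine ⟨hR, ?_⟩
  have hC : Summable (fun p : ℕ × (Fin (Etl w).length → ℕ) =>
      UU (Ehd w) (Etl w) m (β + p.1) p.2) := by
    refine Summable.of_norm_bounded hR fun p => ?_
    have := UU_norm (Etl w) (Ehd w) m (β := β + p.1) (by simp; positivity) p.2
    simpa using this
  have h2 := hC.hasSum.prod_fiberwise (fun j => ih m (β + j) (by simp; positivity))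
  have h3 := (good_cw w).shift (cw_zero w hw) m hβ
  rw [← h2.unique h3]
  exact hC.hasSum

lemma main_word : ∀ (w : List Bool), Adm w → ∀ (m : ℕ) (β : ℂ), 0 < β.re →
    HasSum (UU (Ehd w) (Etl w) m β) (Jc (cw w) m β)
  | [], _, m, β, hβ => by
    rw [cw, Jc_nil, bb_zero m hβ]
    have : UU (Ehd []) (Etl []) m β = fun _ : Fin 0 → ℕ => (β⁻¹)^(m+1) := by
      funext d
      simp only [Ehd, Etl, UU, gg_one]
    rw [this]
    exact hasSum_unique (β := Fin 0 → ℕ) _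
  | true :: w, hA, m, β, hβ => by
    have hb : β ≠ 0 := by rintro rfl; simp at hβ
    have ih := main_word w hA
    exact hasSum_of_rec (u := fun i => UU (Ehd w + 1) (Etl w) i β) (a := fun i => Jc (c1 (cw w)) i β) hb
      (fun m => ih m β hβ) (fun m d => UU_rec (Ehd_pos w) _ m hb d)
      (fun m => (good_cw w).rec1 m hβ) m
  | false :: w, hA, m, β, hβ => by
    have hb : β ≠ 0 := by rintro rfl; simp at hβ
    have ih := main_word w hA.2
    refine hasSum_of_rec (u := fun i => UU 1 (Ehd w :: Etl w) i β) (a := fun i => Jc (c0 (cw w)) i β) hb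
      (v := fun m d => UU (Ehd w) (Etl w) m (β + 1 + ((d 0 : ℕ) : ℂ)) (Fin.tail d))
      (b := fun m => ∑' n, (cw w n : ℂ) * bb m (n-1) (β+1))
      (fun m => ?_) (fun m d => UU_one _ _ m hb d)
      (fun m => (good_cw w).rec0 (cw_zero w hA.1) m hβ) m
    have h := (prod_sum w hA.1 ih m (β := β+1) (by simp; linarith)).2
    exact (Fin.consEquiv (n := (Etl w).length) (fun _ => ℕ)).symm.hasSum_iff.2 h

end Pf
namespace Pf

open Set Filter Topology

/-- The word attached to a composition. -/
def wk : List ℕ → List Bool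
  | [] => []
  | a :: k => List.replicate (a-1) false ++ true :: wk k

lemma cw_rep (w : List Bool) (n : ℕ) : ∀ j, cw (List.replicate j false ++ w) n = cw w n / (n:ℝ)^j
  | 0 => by simp
  | j+1 => by
    rw [List.replicate_succ, List.cons_append, cw, c0, cw_rep w n j, pow_succ, div_div]

lemma cw_wk {a : ℕ} (ha : 0 < a) (k : List ℕ) (n : ℕ) :
    cw (wk (a :: k)) n = (1 / (n:ℝ)^a) * ∑ l ∈ Finset.range n, cw (wk k) l := by
  rw [wk, cw_rep, cw, c1, div_div, ← pow_succ', Nat.sub_add_cancel ha]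
  ring

lemma wk_ne {k : List ℕ} (hk : k ≠ []) : wk k ≠ [] := by
  cases k with
  | nil => exact absurd rfl hk
  | cons a k => simp [wk]

lemma adm_rep (w : List Bool) (hw : w ≠ []) (hA : Adm w) : ∀ j, Adm (List.replicate j false ++ w)
  | 0 => by simpa using hA
  | j+1 => by
    rw [List.replicate_succ, List.cons_append]
    exact ⟨by simp [hw], adm_rep w hw hA j⟩

lemma adm_wk : ∀ k, Adm (wk k)
  | [] => trivial
  | a :: k => adm_rep (true :: wk k) (by simp) (adm_wk k) (a-1)

lemma strictAnti_cons {r : ℕ} (l : ℕ) (t : Fin r → ℕ) :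
    StrictAnti (Fin.cons l t : Fin (r+1) → ℕ) ↔ StrictAnti t ∧ ∀ i, t i < l := by
  constructor
  · intro h
    refine ⟨fun i j hij => ?_, fun i => ?_⟩
    · simpa using h (Fin.succ_lt_succ_iff.2 hij)
    · simpa using h (Fin.succ_pos i)
  · rintro ⟨h1, h2⟩ i j hij
    induction j using Fin.cases with
    | zero => exact absurd hij (Fin.not_lt_zero i)
    | succ j =>
      induction i using Fin.cases with
      | zero => simpa using h2 j
      | succ i => simpa using h1 (Fin.succ_lt_succ_iff.1 hij)

open Classical in
/-- Truncated summand. -/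
noncomputable def FF (k : List ℕ) (N : ℕ) (n : Fin k.length → ℕ) : ℝ :=
  if StrictAnti n ∧ (∀ i, 0 < n i) ∧ ∀ i, n i < N then (∏ i, (n i : ℝ) ^ k.get i)⁻¹ else 0

lemma FF_nonneg (k : List ℕ) (N : ℕ) (n : Fin k.length → ℕ) : 0 ≤ FF k N n := by
  unfold FF; split_ifs
  · positivity
  · exact le_rfl

lemma FF_cons (a : ℕ) (k : List ℕ) (N l : ℕ) (t : Fin k.length → ℕ) :
    FF (a :: k) N (Fin.cons l t : Fin (k.length+1) → ℕ)
      = (if 0 < l ∧ l < N then 1/(l:ℝ)^a else 0) * FF k l t := by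
  unfold FF
  have hiff : (StrictAnti (Fin.cons l t : Fin (k.length+1) → ℕ) ∧
      (∀ i, 0 < (Fin.cons l t : Fin (k.length+1) → ℕ) i) ∧
      ∀ i, (Fin.cons l t : Fin (k.length+1) → ℕ) i < N) ↔ (0 < l ∧ l < N) ∧
      (StrictAnti t ∧ (∀ i, 0 < t i) ∧ ∀ i, t i < l) := by
    rw [strictAnti_cons, Fin.forall_fin_succ, Fin.forall_fin_succ]
    simp only [Fin.cons_zero, Fin.cons_succ]
    constructor
    · rintro ⟨⟨h1, h2⟩, ⟨h3, h4⟩, h5, h6⟩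
      exact ⟨⟨h3, h5⟩, h1, h4, h2⟩
    · rintro ⟨⟨h3, h5⟩, h1, h4, h2⟩
      exact ⟨⟨h1, h2⟩, ⟨h3, h4⟩, h5, fun i => (h2 i).trans h5⟩
  have hp : (∏ i, (((Fin.cons l t : Fin (k.length+1) → ℕ) i : ℕ) : ℝ) ^ (a :: k).get i)⁻¹
      = 1/(l:ℝ)^a * (∏ i, (t i : ℝ) ^ k.get i)⁻¹ := by
    rw [show (∏ i, (((Fin.cons l t : Fin (k.length+1) → ℕ) i : ℕ) : ℝ) ^ (a :: k).get i)
      = ∏ i : Fin (k.length + 1), (((Fin.cons l t : Fin (k.length+1) → ℕ) i : ℕ) : ℝ) ^ (a :: k).get i from rfl,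
      Fin.prod_univ_succ]
    simp only [Fin.cons_zero, Fin.cons_succ]
    rw [mul_inv, one_div]; rfl
  by_cases h1 : 0 < l ∧ l < N
  · by_cases h2 : (StrictAnti t ∧ (∀ i, 0 < t i) ∧ ∀ i, t i < l)
    · refine (if_pos (hiff.2 ⟨h1, h2⟩)).trans ?_
      rw [if_pos h1, if_pos h2, ← hp]; rfl
    · refine (if_neg (fun h => h2 (hiff.1 h).2)).trans ?_
      rw [if_neg h2, mul_zero]
  · refine (if_neg (fun h => h1 (hiff.1 h).1)).trans ?_
    rw [if_neg h1, zero_mul]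

lemma prod_hasSum {ι : Type*} {F : ℕ → ι → ℝ} (hF : ∀ l i, 0 ≤ F l i) {v s : ℕ → ℝ}
    (hv : ∀ l, 0 ≤ v l) (hv0 : v 0 = 0) (hs : ∀ l, 0 < l → HasSum (F l) (s l)) {S : ℝ}
    (hS : HasSum (fun l => v l * s l) S) :
    HasSum (fun p : ℕ × ι => v p.1 * F p.1 p.2) S := by
  have h1 : ∀ l, HasSum (fun i => v l * F l i) (v l * s l) := by
    intro l
    rcases Nat.eq_zero_or_pos l with rfl | hl
    · simp [hv0]
    · exact (hs l hl).mul_left _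
  have h2 : Summable (fun p : ℕ × ι => v p.1 * F p.1 p.2) := by
    rw [summable_prod_of_nonneg (fun p => mul_nonneg (hv _) (hF _ _))]
    refine ⟨fun l => (h1 l).summable, ?_⟩
    simp only [fun l => (h1 l).tsum_eq]
    exact hS.summable
  have h3 := h2.hasSum.prod_fiberwise h1
  rw [hS.unique h3]
  exact h2.hasSum

lemma FF_sum : ∀ (k : List ℕ), (∀ a ∈ k, 0 < a) → ∀ N, 0 < N →
    HasSum (FF k N) (∑ l ∈ Finset.range N, cw (wk k) l)
  | [], _, N, hN => by
    have : ∑ l ∈ Finset.range N, cw (wk []) l = FF [] N default := by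
      have h : FF [] N default = 1 := by
        unfold FF
        rw [if_pos]
        · simp
        · exact ⟨fun i => i.elim0, fun i => i.elim0, fun i => i.elim0⟩
      rw [h, Finset.sum_eq_single 0]
      · simp [wk, cw, cnil]
      · intro b _ hb; simp [wk, cw, cnil, hb]
      · intro h; simp at h; omega
    rw [this]
    exact hasSum_unique (β := Fin 0 → ℕ) _
  | a :: k, hk, N, hN => by
    have ih := FF_sum k (fun b hb => hk b (by simp [hb]))
    have ha : 0 < a := hk a (by simp)
    have hS : HasSum (fun l : ℕ => (if 0 < l ∧ l < N then 1/(l:ℝ)^a else 0) *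
        ∑ i ∈ Finset.range l, cw (wk k) i) (∑ l ∈ Finset.range N, cw (wk (a::k)) l) := by
      have : ∑ l ∈ Finset.range N, cw (wk (a::k)) l = ∑ l ∈ Finset.range N,
          ((if 0 < l ∧ l < N then 1/(l:ℝ)^a else 0) * ∑ i ∈ Finset.range l, cw (wk k) i) := by
        refine Finset.sum_congr rfl fun l hl => ?_
        rw [cw_wk ha]
        rcases Nat.eq_zero_or_pos l with rfl | h
        · simp
        · rw [if_pos ⟨h, Finset.mem_range.1 hl⟩]
      rw [this]
      refine hasSum_sum_of_ne_finset_zero fun l hl => ?_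
      rw [if_neg, zero_mul]
      rintro ⟨-, h⟩
      exact hl (Finset.mem_range.2 h)
    have h := prod_hasSum (F := FF k) (FF_nonneg k) (fun l => by split_ifs <;> positivity)
      (by simp) ih hS
    refine ((Fin.consEquiv (n := k.length) (fun _ => ℕ)).hasSum_iff (f := FF (a::k) N)).1 ?_
    refine h.congr_fun ?_
    rintro ⟨l, t⟩
    exact FF_cons a k N l t

lemma cw_sum_pow (w : List Bool) {x : ℝ} (hx0 : 0 ≤ x) (hx1 : x < 1) :
    Summable (fun n => cw w n * x^n) := by
  refine Summable.of_nonneg_of_le (fun n => mul_nonneg ((good_cw w).nn n) (pow_nonneg hx0 n)) ?_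
    (summable_geometric_of_lt_one hx0 hx1)
  intro n
  exact mul_le_of_le_one_left (pow_nonneg hx0 n) ((good_cw w).le1 n)

noncomputable def MPLt (a : ℕ) (k : List ℕ) (x : ℝ) (n : Fin (a::k).length → ℕ) : ℝ :=
  x ^ (n ⟨0, Nat.succ_pos _⟩) / ∏ i, (n i : ℝ) ^ (a::k).get i

lemma MPLt_cons (a : ℕ) (k : List ℕ) (x : ℝ) (l : ℕ) (t : Fin k.length → ℕ) :
    indicator {n : Fin (a::k).length → ℕ | StrictAnti n ∧ ∀ i, 0 < n i} (MPLt a k x)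
      (Fin.cons l t : Fin (k.length+1) → ℕ) = (if 0 < l then x^l/(l:ℝ)^a else 0) * FF k l t := by
  have h4 := FF_cons a k (l+1) l t
  simp only [Nat.lt_succ_self, and_true] at h4
  have h5 : (if 0 < l then x^l/(l:ℝ)^a else 0) * FF k l t
      = x^l * FF (a::k) (l+1) (Fin.cons l t : Fin (k.length+1) → ℕ) := by
    rw [h4]; split_ifs <;> ring
  rw [h5]
  unfold FF
  by_cases hA : StrictAnti (Fin.cons l t : Fin (k.length+1) → ℕ) ∧
      ∀ i, 0 < (Fin.cons l t : Fin (k.length+1) → ℕ) i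
  · refine (indicator_of_mem (by exact hA) _).trans ?_
    rw [MPLt, div_eq_mul_inv]
    congr 1
    refine (if_pos ?_).symm
    refine ⟨hA.1, hA.2, fun i => ?_⟩
    exact Nat.lt_succ_of_le (hA.1.antitone (Fin.zero_le i))
  · refine (indicator_of_notMem (by exact hA) _).trans ?_
    refine (mul_eq_zero_of_right _ (if_neg ?_)).symm
    rintro ⟨h6, h7, -⟩
    exact hA ⟨h6, h7⟩

lemma MPL_eq {k : List ℕ} (hk : k ≠ []) (hpos : ∀ a ∈ k, 0 < a) {x : ℝ} (hx0 : 0 ≤ x)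
    (hx1 : x < 1) : HasSum (fun n => cw (wk k) n * x^n) (MPL k x) := by
  cases k with
  | nil => exact absurd rfl hk
  | cons a k =>
    have ih := FF_sum k (fun b hb => hpos b (by simp [hb]))
    have ha : 0 < a := hpos a (by simp)
    have hs := (cw_sum_pow (wk (a::k)) hx0 hx1).hasSum
    have hS : HasSum (fun l : ℕ => (if 0 < l then x^l/(l:ℝ)^a else 0) *
        ∑ i ∈ Finset.range l, cw (wk k) i) (∑' n, cw (wk (a::k)) n * x^n) := by
      refine hs.congr_fun fun l => ?_
      rw [cw_wk ha]
      rcases Nat.eq_zero_or_pos l with rfl | h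
      · simp
      · rw [if_pos h]; ring
    have h := prod_hasSum (F := FF k) (FF_nonneg k) (fun l => by split_ifs <;> positivity)
      (by simp) ih hS
    have h3 : MPL (a::k) x = ∑' n, cw (wk (a::k)) n * x^n := by
      unfold MPL
      rw [dif_pos (by simp)]
      refine HasSum.tsum_eq ?_
      refine (hasSum_subtype_iff_indicator (s := {n : Fin (a::k).length → ℕ | StrictAnti n ∧ ∀ i, 0 < n i})
        (f := MPLt a k x)).2 ?_
      refine ((Fin.consEquiv (n := k.length) (fun _ => ℕ)).hasSum_iff).1 ?_
      refine h.congr_fun ?_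
      rintro ⟨l, t⟩
      exact MPLt_cons a k x l t
    rw [h3]; exact hs

end Pf
namespace Pf

open Set Filter Topology

lemma integrand_eq {k : List ℕ} (hk : k ≠ []) (hpos : ∀ a ∈ k, 0 < a) (m : ℕ) (α : ℂ)
    {y : ℝ} (hy : y ∈ Ioo (0:ℝ) 1) :
    ((MPL k (1-y) * Real.log (1 - (1-y)) ^ m : ℝ) : ℂ) /
          (((1-y : ℝ) : ℂ) * ((1 : ℂ) - ((1-y : ℝ) : ℂ)) ^ α)
      = (-1) ^ m * (Nat.factorial m : ℂ) *
        ∑' n, (cw (wk k) n : ℂ) * ker m (n-1) (1-α) y := by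
  have h := Complex.hasSum_ofReal.2 (MPL_eq hk hpos (x := 1 - y) (by linarith [hy.2]) (by linarith [hy.1]))
  have hy0 : (y:ℂ) ≠ 0 := by exact_mod_cast hy.1.ne'
  have hy1 : (1-(y:ℂ)) ≠ 0 := by
    have : (1 - y : ℝ) ≠ 0 := by linarith [hy.2]
    exact_mod_cast this
  have h2 := h.mul_right ((y:ℂ)^(1-α-1) * (Lp m y : ℂ) / (1 - (y:ℂ)))
  have h3 : HasSum (fun n => (cw (wk k) n : ℂ) * ker m (n-1) (1-α) y)
      ((MPL k (1-y) : ℂ) * ((y:ℂ)^(1-α-1) * (Lp m y : ℂ) / (1 - (y:ℂ)))) := by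
    refine h2.congr_fun fun n => ?_
    cases n with
    | zero => simp [cw_zero _ (wk_ne hk)]
    | succ n =>
      simp only [ker, Nat.add_sub_cancel]
      push_cast
      rw [pow_succ]
      field_simp
  rw [h3.tsum_eq]
  have e1 : (1 : ℂ) - ((1-y : ℝ) : ℂ) = y := by push_cast; ring
  have e2 : (1:ℂ) - α - 1 = -α := by ring
  have hf : (m.factorial : ℂ) ≠ 0 := by exact_mod_cast m.factorial_ne_zero
  have e3 : (y:ℂ)^α ≠ 0 := by simp [Complex.cpow_eq_zero_iff, hy0]
  rw [e1, e2, Complex.cpow_neg, Lp, sub_sub_cancel]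
  push_cast
  have e4 : (-(Real.log y : ℂ))^m = (-1)^m * (Real.log y : ℂ)^m := by rw [neg_pow]
  have e5 : ((-1:ℂ)^m) * (-1)^m = 1 := by rw [← mul_pow]; simp
  rw [e4]
  field_simp
  linear_combination (-(MPL k (1-y) : ℂ) * (Real.log y : ℂ)^m) * e5

lemma integral_eq {k : List ℕ} (hk : k ≠ []) (hpos : ∀ a ∈ k, 0 < a) (m : ℕ) (α : ℂ)
    (hre : α.re < 1) :
    (∫ x in (0:ℝ)..1,
        ((MPL k x * Real.log (1 - x) ^ m : ℝ) : ℂ) /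
          ((x : ℂ) * ((1 : ℂ) - (x : ℂ)) ^ α)) =
      (-1) ^ m * (Nat.factorial m : ℂ) * ∑' n, (cw (wk k) n : ℂ) * bb m (n-1) (1-α) := by
  have hb : 0 < (1-α).re := by simp; linarith
  have h0 := intervalIntegral.integral_comp_sub_left (a := 0) (b := 1) (fun x : ℝ =>
    ((MPL k x * Real.log (1 - x) ^ m : ℝ) : ℂ) / ((x : ℂ) * ((1 : ℂ) - (x : ℂ)) ^ α)) 1
  rw [sub_self, sub_zero] at h0
  rw [← h0, intervalIntegral.integral_of_le zero_le_one, integral_Ioc_eq_integral_Ioo,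
    setIntegral_congr_fun measurableSet_Ioo (fun y hy => integrand_eq hk hpos m α hy),
    integral_const_mul]
  congr 1
  have h1 := hasSum_integral_of_summable_integral_norm (μ := volume.restrict (Ioo (0:ℝ) 1))
    (F := fun n y => (cw (wk k) n : ℂ) * ker m (n-1) (1-α) y)
    (fun n => (int_ker m (n-1) hb).const_mul _) ?_
  · rw [← h1.tsum_eq]
    refine tsum_congr fun n => ?_
    rw [integral_const_mul]; rfl
  · refine ((good_cw (wk k)).smPred (cw_zero _ (wk_ne hk)) m hb).congr fun n => ?_
    simp only [norm_mul, Complex.norm_real, Real.norm_of_nonneg ((good_cw (wk k)).nn n)]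
    rw [integral_const_mul, int_norm_ker]

end Pf
namespace Pf

open Set Filter Topology

/-! Words and the Hoffman dual. -/

/-- Exponent list. -/
def EE (w : List Bool) : List ℕ := Ehd w :: Etl w

lemma EE_true (w : List Bool) : EE (true :: w) = plusOne (EE w) := rfl
lemma EE_false (w : List Bool) : EE (false :: w) = 1 :: EE w := rfl

lemma EE_fromWord : ∀ w : List Bool, fromWord (w.map fun b => !b) = EE w
  | [] => rfl
  | true :: w => by
    simp only [List.map_cons, Bool.not_true, fromWord, EE_fromWord w]
    rfl
  | false :: w => by
    simp only [List.map_cons, Bool.not_false, fromWord, EE_fromWord w, EE_false]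

lemma wk_toWord : ∀ k : List ℕ, k ≠ [] → wk k = toWord k ++ [true]
  | [], h => absurd rfl h
  | [a], _ => by simp [wk, toWord]
  | a :: b :: k, _ => by
    rw [wk, wk_toWord (b :: k) (by simp), toWord]
    simp

lemma toWord_append (a : ℕ) : ∀ k : List ℕ, toWord (k ++ [a]) = wk k ++ List.replicate (a-1) false
  | [] => by simp [wk, toWord]
  | [b] => by simp [wk, toWord]
  | b :: c :: k => by
    have := toWord_append a (c :: k)
    simp only [List.cons_append] at this ⊢
    rw [toWord, this]
    simp [wk]

lemma toWord_reverse : ∀ k : List ℕ, toWord k.reverse = (toWord k).reverse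
  | [] => rfl
  | [a] => by simp [toWord]
  | a :: b :: k => by
    have := toWord_reverse (b :: k)
    rw [List.reverse_cons, toWord_append, wk_toWord _ (by simp), this, toWord]
    simp

lemma plusOne_append (l : List ℕ) (hl : l ≠ []) (t : List ℕ) :
    plusOne (l ++ t) = plusOne l ++ t := by
  cases l with
  | nil => exact absurd rfl hl
  | cons a l => rfl

lemma plusOne_comm (l : List ℕ) (hl : l ≠ []) :
    plusOne ((plusOne l.reverse).reverse) = (plusOne (plusOne l).reverse).reverse := by
  cases l with
  | nil => exact absurd rfl hl
  | cons a t =>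
    rcases List.eq_nil_or_concat t with rfl | ⟨t', b, rfl⟩
    · rfl
    · simp [plusOne]

lemma EE_ne (w : List Bool) : EE w ≠ [] := by simp [EE]

lemma EE_snoc_false : ∀ w, EE (w ++ [false]) = EE w ++ [1]
  | [] => rfl
  | true :: w => by
    rw [List.cons_append, EE_true, EE_snoc_false w, plusOne_append _ (EE_ne w), EE_true]
  | false :: w => by
    rw [List.cons_append, EE_false, EE_snoc_false w, EE_false]; rfl

lemma EE_snoc_true : ∀ w, EE (w ++ [true]) = (plusOne (EE w).reverse).reverse
  | [] => rfl
  | true :: w => by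
    rw [List.cons_append, EE_true, EE_snoc_true w, EE_true, plusOne_comm _ (EE_ne w)]
  | false :: w => by
    rw [List.cons_append, EE_false, EE_snoc_true w, EE_false, List.reverse_cons,
      plusOne_append _ (by simpa using EE_ne w)]
    simp

lemma EE_reverse : ∀ w, EE w.reverse = (EE w).reverse
  | [] => rfl
  | true :: w => by
    rw [List.reverse_cons, EE_snoc_true, EE_reverse w, List.reverse_reverse, EE_true]
  | false :: w => by
    rw [List.reverse_cons, EE_snoc_false, EE_reverse w, EE_false, List.reverse_cons]

lemma dual_eq {k : List ℕ} (hk : k ≠ []) :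
    plusOne (HDual k.reverse) = (EE (wk k)).reverse := by
  rw [HDual, EE_fromWord, ← EE_true, toWord_reverse, ← EE_reverse, wk_toWord k hk]
  simp

lemma len_rep (w : List Bool) : ∀ j, (Etl (List.replicate j false ++ w)).length = j + (Etl w).length
  | 0 => by simp
  | j+1 => by
    rw [List.replicate_succ, List.cons_append, Etl, List.length_cons, len_rep w j]; omega

lemma len_wk : ∀ k : List ℕ, (∀ a ∈ k, 0 < a) → (Etl (wk k)).length + k.length = k.sum
  | [], _ => rfl
  | a :: k, h => by
    have h1 := len_wk k (fun b hb => h b (by simp [hb]))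
    have h2 := h a (by simp)
    rw [wk, len_rep, Etl, List.sum_cons, List.length_cons]
    omega

/-! Chains of summation indices. -/

/-- From gaps to a strictly increasing sequence. -/
def cs : (s : ℕ) → (r : ℕ) → (Fin r → ℕ) → (Fin r → ℕ)
  | _, 0, d => d
  | s, r+1, d => Fin.cons (s + d 0) (cs (s + d 0 + 1) r (Fin.tail d))

lemma strictMono_cons {r : ℕ} (l : ℕ) (t : Fin r → ℕ) :
    StrictMono (Fin.cons l t : Fin (r+1) → ℕ) ↔ StrictMono t ∧ ∀ i, l < t i := by
  constructor
  · intro h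
    refine ⟨fun i j hij => ?_, fun i => ?_⟩
    · simpa using h (Fin.succ_lt_succ_iff.2 hij)
    · simpa using h (Fin.succ_pos i)
  · rintro ⟨h1, h2⟩ i j hij
    induction j using Fin.cases with
    | zero => exact absurd hij (Fin.not_lt_zero i)
    | succ j =>
      induction i using Fin.cases with
      | zero => simpa using h2 j
      | succ i => simpa using h1 (Fin.succ_lt_succ_iff.1 hij)

lemma cs_mem : ∀ (r s : ℕ) (d : Fin r → ℕ), StrictMono (cs s r d) ∧ ∀ i, s ≤ cs s r d i
  | 0, s, d => ⟨fun i => i.elim0, fun i => i.elim0⟩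
  | r+1, s, d => by
    obtain ⟨h1, h2⟩ := cs_mem r (s + d 0 + 1) (Fin.tail d)
    refine ⟨(strictMono_cons _ _).2 ⟨h1, fun i => h2 i⟩, ?_⟩
    rw [Fin.forall_fin_succ]
    simp only [cs, Fin.cons_zero, Fin.cons_succ]
    exact ⟨by omega, fun i => by have := h2 i; omega⟩

lemma cs_inj : ∀ (r s : ℕ) (d d' : Fin r → ℕ), cs s r d = cs s r d' → d = d'
  | 0, s, d, d', _ => Subsingleton.elim _ _
  | r+1, s, d, d', h => by
    simp only [cs] at h
    have h0 : d 0 = d' 0 := by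
      have := congrFun h 0
      simp only [Fin.cons_zero] at this; omega
    have h1 : Fin.tail d = Fin.tail d' := by
      apply cs_inj r (s + d 0 + 1)
      funext i
      have := congrFun h i.succ
      simp only [Fin.cons_succ] at this
      rw [this, h0]
    rw [← Fin.cons_self_tail d, ← Fin.cons_self_tail d', h0, h1]

lemma cs_surj : ∀ (r s : ℕ) (n : Fin r → ℕ), StrictMono n → (∀ i, s ≤ n i) → ∃ d, cs s r d = n
  | 0, s, n, _, _ => ⟨n, rfl⟩
  | r+1, s, n, h, hs => by
    rw [← Fin.cons_self_tail n] at h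
    obtain ⟨h1, h2⟩ := (strictMono_cons _ _).1 h
    obtain ⟨d, hd⟩ := cs_surj r (n 0 + 1) (Fin.tail n) h1 h2
    refine ⟨Fin.cons (n 0 - s) d, ?_⟩
    simp only [cs, Fin.cons_zero, Fin.tail_cons]
    rw [Nat.add_sub_cancel' (hs 0), hd, Fin.cons_self_tail]

/-- Gaps correspond to strictly decreasing positive tuples. -/
noncomputable def chainEquiv (p : ℕ) :
    (Fin p → ℕ) ≃ {n : Fin p → ℕ // StrictAnti n ∧ ∀ i, 0 < n i} :=
  Equiv.ofBijective (fun d => ⟨fun i => cs 1 p d i.rev, fun i j hij =>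
      (cs_mem p 1 d).1 (Fin.rev_lt_rev.2 hij), fun i => (cs_mem p 1 d).2 _⟩) (by
    constructor
    · intro d d' h
      have h1 := congrArg Subtype.val h
      refine cs_inj p 1 d d' ?_
      funext i
      have := congrFun h1 i.rev
      simpa using this
    · rintro ⟨n, h1, h2⟩
      obtain ⟨d, hd⟩ := cs_surj p 1 (fun i => n i.rev) (fun i j hij => h1 (Fin.rev_lt_rev.2 hij))
        (fun i => h2 _)
      refine ⟨d, ?_⟩
      apply Subtype.ext
      funext i
      have := congrFun hd i.rev
      simpa using this)

/-! The sum over the tuples `j`. -/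

lemma sum_adT {M : Type*} [AddCommMonoid M] (r m : ℕ) (f : (Fin (r+1) → ℕ) → M) :
    ∑ j ∈ Finset.Nat.antidiagonalTuple (r+1) m, f j
      = ∑ p ∈ Finset.HasAntidiagonal.antidiagonal m,
          ∑ j ∈ Finset.Nat.antidiagonalTuple r p.2, f (Fin.cons p.1 j) := by
  rw [Finset.sum_sigma']
  refine Finset.sum_bij' (fun j _ => ⟨(j 0, m - j 0), Fin.tail j⟩) (fun x _ => Fin.cons x.1.1 x.2)
    ?_ ?_ ?_ ?_ ?_
  · intro j hj
    rw [Finset.Nat.mem_antidiagonalTuple, Fin.sum_univ_succ] at hj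
    simp only [Finset.mem_sigma, Finset.HasAntidiagonal.mem_antidiagonal,
      Finset.Nat.mem_antidiagonalTuple, Fin.tail]
    omega
  · rintro ⟨⟨a, b⟩, j⟩ hx
    simp only [Finset.mem_sigma, Finset.HasAntidiagonal.mem_antidiagonal,
      Finset.Nat.mem_antidiagonalTuple] at hx ⊢
    rw [Fin.sum_univ_succ]
    simp only [Fin.cons_zero, Fin.cons_succ]
    omega
  · intro j _
    simp
  · rintro ⟨⟨a, b⟩, j⟩ hx
    simp only [Finset.mem_sigma, Finset.HasAntidiagonal.mem_antidiagonal,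
      Finset.Nat.mem_antidiagonalTuple] at hx ⊢
    obtain ⟨h1, h2⟩ := hx
    have : b = m - a := by omega
    subst this
    simp
  · intro j _
    simp

lemma UU_eq {K : Type*} [Field K] : ∀ (es : List ℕ) (e m s : ℕ) (β : K)
    (d : Fin (es.length + 1) → ℕ),
    UU e es m (β + ((s + d 0 : ℕ) : K)) (Fin.tail d)
      = ∑ j ∈ Finset.Nat.antidiagonalTuple (es.length + 1) m,
        ∏ i, gg ((e :: es).get i) (j i) (β + ((cs s (es.length + 1) d i : ℕ) : K))
  | [], e, m, s, β, d => by
    simp only [List.length_nil, Nat.reduceAdd]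
    rw [Finset.Nat.antidiagonalTuple_one, Finset.sum_singleton]
    simp [UU, cs]
  | e' :: es, e, m, s, β, d => by
    have ih := UU_eq (K := K) es e'
    simp only [List.length_cons]
    rw [sum_adT]
    simp only [UU]
    refine Finset.sum_congr rfl fun p _ => ?_
    have h := ih p.2 (s + d 0 + 1) β (Fin.tail d)
    have e1 : β + ((s + d 0 : ℕ) : K) + 1 + ((Fin.tail d 0 : ℕ) : K)
        = β + ((s + d 0 + 1 + Fin.tail d 0 : ℕ) : K) := by push_cast; ring
    rw [e1]
    rw [h, Finset.mul_sum]
    refine Finset.sum_congr rfl fun j _ => ?_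
    conv_rhs => rw [Fin.prod_univ_succ]
    simp only [cs, Fin.cons_zero, Fin.cons_succ]
    rfl

end Pf
namespace Pf

open Set Filter Topology

/-- Single term for fixed `j`. -/
noncomputable def PP {K : Type*} [Field K] {p : ℕ} (L j : Fin p → ℕ) (γ : K) (d : Fin p → ℕ) : K :=
  ∏ i, gg (L i) (j i) (γ + ((cs 1 p d i : ℕ) : K))

lemma cs_pos (p : ℕ) (d : Fin p → ℕ) (i : Fin p) : 1 ≤ cs 1 p d i := (cs_mem p 1 d).2 i

lemma PP_norm {p : ℕ} (L j : Fin p → ℕ) {γ : ℂ} (hγ : -1 < γ.re) (d : Fin p → ℕ) :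
    ‖PP L j γ d‖ ≤ PP L j γ.re d := by
  unfold PP
  rw [norm_prod]
  refine Finset.prod_le_prod (fun i _ => norm_nonneg _) fun i _ => ?_
  have h1 : (1:ℝ) ≤ (cs 1 p d i : ℕ) := by exact_mod_cast cs_pos p d i
  have := gg_norm (L i) (j i) (β := γ + ((cs 1 p d i : ℕ) : ℂ)) (by simp; linarith)
  simpa using this

lemma PP_nonneg {p : ℕ} (L j : Fin p → ℕ) {s : ℝ} (hs : -1 < s) (d : Fin p → ℕ) :
    0 ≤ PP L j s d := by
  unfold PP
  refine Finset.prod_nonneg fun i _ => gg_nonneg _ _ ?_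
  have h1 : (1:ℝ) ≤ (cs 1 p d i : ℕ) := by exact_mod_cast cs_pos p d i
  linarith

lemma sum_side {k : List ℕ} (hk : k ≠ []) (m : ℕ) {α : ℂ} (hre : α.re < 1) :
    ∑ j ∈ Finset.Nat.antidiagonalTuple ((Etl (wk k)).length + 1) m,
      ∑' d, PP (EE (wk k)).get j (-α) d = ∑' n, (cw (wk k) n : ℂ) * bb m (n-1) (1-α) := by
  have hb : 0 < (1-α).re := by simp; linarith
  obtain ⟨hR, hC⟩ := prod_sum (wk k) (wk_ne hk) (main_word _ (adm_wk k)) m hb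
  set e := Ehd (wk k)
  set es := Etl (wk k)
  have hR2 : Summable (fun d => ∑ j ∈ Finset.Nat.antidiagonalTuple (es.length + 1) m,
      PP (e :: es).get j (-α).re d) := by
    refine ((Fin.consEquiv (n := es.length) (fun _ => ℕ)).summable_iff).1 ?_
    refine hR.congr ?_
    rintro ⟨N, d⟩
    have := UU_eq es e m 1 (-α).re (Fin.cons N d)
    simp only [Fin.cons_zero, Fin.tail_cons] at this
    refine Eq.trans ?_ this
    congr 1
    simp; ring
  have hC2 : HasSum (fun d => ∑ j ∈ Finset.Nat.antidiagonalTuple (es.length + 1) m,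
      PP (e :: es).get j (-α) d) (∑' n, (cw (wk k) n : ℂ) * bb m (n-1) (1-α)) := by
    refine ((Fin.consEquiv (n := es.length) (fun _ => ℕ)).hasSum_iff).1 ?_
    refine hC.congr_fun ?_
    rintro ⟨N, d⟩
    have := UU_eq es e m 1 (-α) (Fin.cons N d)
    simp only [Fin.cons_zero, Fin.tail_cons] at this
    refine Eq.trans (this.symm) ?_
    congr 1
    push_cast; ring
  have hre' : -1 < (-α).re := by simp; linarith
  have hj : ∀ j ∈ Finset.Nat.antidiagonalTuple (es.length + 1) m,
      Summable (PP (e :: es).get j (-α)) := by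
    intro j hj
    refine Summable.of_norm_bounded hR2 fun d => (PP_norm _ _ hre' d).trans ?_
    exact Finset.single_le_sum (f := fun j => PP (e :: es).get j (-α).re d)
      (fun j _ => PP_nonneg _ _ hre' d) hj
  rw [← hC2.tsum_eq, Summable.tsum_finsetSum hj]
  rfl

lemma HMZV_eq {p : ℕ} (l : List ℕ) (h : l.length = p) (a : ℂ) :
    HMZV l a = ∑' n : {n : Fin p → ℕ // StrictAnti n ∧ ∀ i, 0 < n i},
      ∏ i, ((n.1 i : ℂ) + a - 1) ^ (-(l.get (i.cast h.symm) : ℤ)) := by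
  subst h; rfl

lemma HMZV_side {p : ℕ} (R j : Fin p → ℕ) (α : ℂ) :
    ((∏ i, Nat.choose (R i + j i - 1) (j i) : ℕ) : ℂ) *
      HMZV (List.ofFn fun i => R i + j i) (1-α)
      = ∑' d, PP (fun i => R i.rev) (fun i => j i.rev) (-α) d := by
  rw [HMZV_eq _ (List.length_ofFn), ← (chainEquiv p).tsum_eq, ← tsum_mul_left]
  refine tsum_congr fun d => ?_
  unfold PP
  rw [← Equiv.prod_comp Fin.revPerm (fun i => gg (R i.rev) (j i.rev) (-α + ((cs 1 p d i : ℕ) : ℂ)))]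
  rw [Nat.cast_prod, ← Finset.prod_mul_distrib]
  refine Finset.prod_congr rfl fun i _ => ?_
  simp only [gg, Fin.revPerm_apply, Fin.rev_rev, List.get_ofFn, zpow_neg, zpow_natCast, inv_pow]
  congr 3
  change ((cs 1 p d i.rev : ℕ) : ℂ) + (1 - α) - 1 = _
  ring

lemma sum_rev {p m : ℕ} (f : (Fin p → ℕ) → ℂ) :
    ∑ j ∈ Finset.Nat.antidiagonalTuple p m, f (fun i => j i.rev)
      = ∑ j ∈ Finset.Nat.antidiagonalTuple p m, f j := by
  have hm : ∀ j ∈ Finset.Nat.antidiagonalTuple p m,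
      (fun i : Fin p => j i.rev) ∈ Finset.Nat.antidiagonalTuple p m := by
    intro j hj
    rw [Finset.Nat.mem_antidiagonalTuple] at hj ⊢
    rw [← hj]
    exact Equiv.sum_comp Fin.revPerm j
  exact Finset.sum_bij' (fun j _ i => j i.rev) (fun j _ i => j i.rev) hm hm
    (fun j _ => by simp) (fun j _ => by simp) (fun j _ => rfl)

lemma getD_rev (L : List ℕ) (q : ℕ) (h : L.length = q + 1) (i : Fin (q+1)) :
    L.reverse.getD (i.rev : ℕ) 0 = L.get (i.cast h.symm) := by
  have h1 : (i.rev : ℕ) < L.reverse.length := by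
    rw [List.length_reverse, h]; exact i.rev.2
  rw [List.getD_eq_getElem _ _ h1, List.getElem_reverse]
  simp only [List.get_eq_getElem]
  congr 1
  simp [Fin.val_rev]; omega

end Pf

theorem stmt0 (k : List ℕ) (hk : k ≠ []) (hkpos : ∀ a ∈ k, 0 < a)
    (m : ℕ) (hm : 0 < m) (α : ℂ) (hα : ∀ j : ℕ, 0 < j → α ≠ (j : ℂ)) (hre : α.re < 1) :
    (∫ x in (0:ℝ)..1,
        ((MPL k x * Real.log (1 - x) ^ m : ℝ) : ℂ) /
          ((x : ℂ) * ((1 : ℂ) - (x : ℂ)) ^ α)) =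
      (-1) ^ m * (Nat.factorial m : ℂ) *
        ∑ j ∈ Finset.Nat.antidiagonalTuple (k.sum + 1 - k.length) m,
          ((∏ i : Fin (k.sum + 1 - k.length), Nat.choose
              ((plusOne (HDual k.reverse)).getD (i : ℕ) 0 + j i - 1) (j i) : ℕ) : ℂ) *
            HMZV (List.ofFn fun i : Fin (k.sum + 1 - k.length) =>
              (plusOne (HDual k.reverse)).getD (i : ℕ) 0 + j i) (1 - α) := by
  have hp : k.sum + 1 - k.length = (Pf.Etl (Pf.wk k)).length + 1 := by
    have := Pf.len_wk k hkpos
    omega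
  rw [Pf.integral_eq hk hkpos m α hre, ← Pf.sum_side hk m hre, hp, Pf.dual_eq hk]
  congr 1
  rw [← Pf.sum_rev]
  refine Finset.sum_congr rfl fun j _ => ?_
  have h := Pf.HMZV_side (p := (Pf.Etl (Pf.wk k)).length + 1)
    (fun i => (Pf.EE (Pf.wk k)).reverse.getD (i : ℕ) 0) j α
  refine Eq.trans ?_ h.symm
  have hL : (fun i : Fin ((Pf.Etl (Pf.wk k)).length + 1) =>
      (Pf.EE (Pf.wk k)).reverse.getD (i.rev : ℕ) 0) = (Pf.EE (Pf.wk k)).get := by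
    funext i
    exact Pf.getD_rev (Pf.EE (Pf.wk k)) _ rfl i
  rw [hL]
  rfl
end

section
/- Let k=(k_1,…,k_r) be a composition, let m be a positive integer, let α∈ℂ∖ℕ with ℜ(α)<1, and set n=|k|+1−dep(k). Then ∫_0^1 A(k;x)·log^m((1−x)/(1+x))/(x·((1−x)/(1+x))^α) dx = (−1)^m·m!·Σ_{|j|=m, dep(j)=n} B((←k^∨)_+; j)·T((←k^∨)_+ + j; 1−α), where the sum is over j∈ℕ_0^n with j_1+⋯+j_n=m. -/
open scoped BigOperators
open MeasureTheory

/-- Iterated sum operator with shift `a`. -/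
noncomputable def SOp (a : ℝ) : List ℕ → (ℕ → ENNReal) → ENNReal
  | [], f => f 0
  | p :: k, f => SOp a k (fun n => ∑' l : ℕ,
      2 * (f (n + 1 + 2 * l) * ((ENNReal.ofReal (((n + 1 + 2 * l : ℕ) : ℝ) - a))⁻¹) ^ p))

lemma SOp_cons (a : ℝ) (p : ℕ) (k : List ℕ) (f : ℕ → ENNReal) :
    SOp a (p :: k) f = SOp a k (fun n => ∑' l : ℕ,
      2 * (f (n + 1 + 2 * l) * ((ENNReal.ofReal (((n + 1 + 2 * l : ℕ) : ℝ) - a))⁻¹) ^ p)) := rfl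

lemma SOp_congr_pos (a : ℝ) (k : List ℕ) (hk : k ≠ []) (f g : ℕ → ENNReal)
    (h : ∀ n, 0 < n → f n = g n) : SOp a k f = SOp a k g := by
  cases k with
  | nil => exact absurd rfl hk
  | cons p k =>
    rw [SOp_cons, SOp_cons]
    congr 1
    funext n
    refine tsum_congr fun l => ?_
    rw [h _ (by omega)]

lemma SOp_mono (a : ℝ) (k : List ℕ) (f g : ℕ → ENNReal)
    (h : ∀ n, f n ≤ g n) : SOp a k f ≤ SOp a k g := by
  induction k generalizing f g with
  | nil => exact h 0
  | cons p k ih =>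
    rw [SOp_cons, SOp_cons]
    refine ih _ _ fun n => ENNReal.tsum_le_tsum fun l => ?_
    gcongr
    exact h _

lemma SOp_mul (a : ℝ) (k : List ℕ) (c : ENNReal) (f : ℕ → ENNReal) :
    SOp a k (fun n => c * f n) = c * SOp a k f := by
  induction k generalizing f with
  | nil => rfl
  | cons p k ih =>
    rw [SOp_cons, SOp_cons, ← ih]
    congr 1
    funext n
    rw [← ENNReal.tsum_mul_left]
    refine tsum_congr fun l => ?_
    ring

lemma SOp_tsum {ι : Type*} (a : ℝ) (k : List ℕ) (f : ι → ℕ → ENNReal) :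
    SOp a k (fun n => ∑' i, f i n) = ∑' i, SOp a k (f i) := by
  induction k generalizing f with
  | nil => rfl
  | cons p k ih =>
    rw [SOp_cons]
    simp_rw [SOp_cons]
    rw [← ih]
    congr 1
    funext n
    rw [ENNReal.tsum_comm]
    refine tsum_congr fun l => ?_
    rw [← ENNReal.tsum_mul_right, ← ENNReal.tsum_mul_left]

lemma SOp_comm (a b : ℝ) (k p : List ℕ) (g : ℕ → ℕ → ENNReal) :
    SOp a k (fun n => SOp b p (fun N => g n N)) = SOp b p (fun N => SOp a k (fun n => g n N)) := by
  induction k generalizing g with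
  | nil => rfl
  | cons q k ih =>
    simp_rw [SOp_cons a q]
    rw [← ih]
    congr 1
    funext n
    rw [SOp_tsum]
    refine tsum_congr fun l => ?_
    rw [SOp_mul, ← mul_comm (_ ^ q), ← SOp_mul]
    congr 2
    funext N
    exact mul_comm _ _

lemma SOp_measurable {X : Type*} [MeasurableSpace X] (a : ℝ) (k : List ℕ)
    (f : X → ℕ → ENNReal) (hf : ∀ n, Measurable (fun x => f x n)) :
    Measurable (fun x => SOp a k (f x)) := by
  induction k generalizing f with
  | nil => exact hf 0
  | cons q k ih =>
    simp_rw [SOp_cons a q]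
    refine ih _ fun n => ?_
    refine Measurable.tsum fun l => ?_
    exact ((hf _).mul_const _).const_mul _

lemma SOp_lintegral {X : Type*} [MeasurableSpace X] (μ : Measure X) (a : ℝ) (k : List ℕ)
    (f : X → ℕ → ENNReal) (hf : ∀ n, Measurable (fun x => f x n)) :
    ∫⁻ x, SOp a k (f x) ∂μ = SOp a k (fun n => ∫⁻ x, f x n ∂μ) := by
  induction k generalizing f with
  | nil => rfl
  | cons q k ih =>
    simp_rw [SOp_cons a q]
    rw [ih]
    · congr 1
      funext n
      rw [lintegral_tsum]
      · refine tsum_congr fun l => ?_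
        rw [lintegral_const_mul _ ((hf _).mul_const _), lintegral_mul_const _ (hf _)]
      · intro l
        exact (((hf _).mul_const _).const_mul _).aemeasurable
    · intro n
      refine Measurable.tsum fun l => ?_
      exact ((hf _).mul_const _).const_mul _

lemma hasSum_cast' {ι : Type*} {f g : ι → ℝ} {a b : ℝ} (h : HasSum g b) (hf : ∀ i, f i = g i)
    (hb : a = b) : HasSum f a := by
  have : f = g := funext hf
  rw [this, hb]
  exact h

lemma hasDerivAt_cast' {f g : ℝ → ℝ} {a b x : ℝ} (h : HasDerivAt g b x) (hf : ∀ i, f i = g i)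
    (hb : a = b) : HasDerivAt f a x := by
  have : f = g := funext hf
  rw [this, hb]
  exact h

/-- The Moebius involution. -/
noncomputable def YY (x : ℝ) : ℝ := (1 - x) / (1 + x)

lemma YY_pos {x : ℝ} (hx : x ∈ Set.Ioo (0:ℝ) 1) : 0 < YY x :=
  div_pos (by linarith [hx.2]) (by linarith [hx.1])

lemma YY_lt_one {x : ℝ} (hx : x ∈ Set.Ioo (0:ℝ) 1) : YY x < 1 := by
  rw [YY, div_lt_one (by linarith [hx.1])]; linarith [hx.1]

lemma YY_measurable : Measurable YY := by unfold YY; fun_prop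

noncomputable def KA (n : ℕ) (s : ℝ) : ENNReal :=
  ∫⁻ x in Set.Ioo (0:ℝ) 1, ENNReal.ofReal (x ^ n * YY x ^ s / x)

noncomputable def KB (n : ℕ) (s : ℝ) : ENNReal :=
  ∫⁻ x in Set.Ioo (0:ℝ) 1, ENNReal.ofReal (x ^ n * YY x ^ s * (2 / (1 - x ^ 2)))

lemma KA_meas (n : ℕ) (s : ℝ) : Measurable (fun x : ℝ => ENNReal.ofReal (x ^ n * YY x ^ s / x)) := by
  have := YY_measurable
  fun_prop

lemma KB_meas (n : ℕ) (s : ℝ) :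
    Measurable (fun x : ℝ => ENNReal.ofReal (x ^ n * YY x ^ s * (2 / (1 - x ^ 2)))) := by
  have := YY_measurable
  fun_prop

lemma KB_expand (n : ℕ) (s : ℝ) : KB n s = ∑' l : ℕ, 2 * KA (n + 1 + 2 * l) s := by
  unfold KA KB
  simp_rw [← lintegral_const_mul _ (KA_meas _ s)]
  rw [← lintegral_tsum (fun l => ((KA_meas _ s).const_mul _).aemeasurable)]
  refine setLIntegral_congr_fun measurableSet_Ioo fun x hx => ?_
  have hy := YY_pos hx
  have h2 : (2 : ENNReal) = ENNReal.ofReal 2 := by simp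
  have hx0 := hx.1
  have hsq : x ^ 2 < 1 := by nlinarith [hx.1, hx.2]
  have hs : HasSum (fun l : ℕ => 2 * (x ^ (n + 1 + 2 * l) * YY x ^ s / x))
      (x ^ n * YY x ^ s * (2 / (1 - x ^ 2))) := by
    have := (hasSum_geometric_of_lt_one (sq_nonneg x) hsq).mul_left (x ^ n * YY x ^ s * 2)
    refine hasSum_cast' this (fun l => ?_) (by ring)
    rw [pow_add, pow_add, pow_mul]
    field_simp
  simp only [h2]
  rw [← hs.tsum_eq, ENNReal.ofReal_tsum_of_nonneg (fun l => by positivity) hs.summable]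
  refine tsum_congr fun l => ?_
  rw [ENNReal.ofReal_mul (by norm_num)]

lemma KA_expand (n : ℕ) (s : ℝ) : KA n s = ∑' l : ℕ, 2 * KB n (s + 1 + 2 * l) := by
  unfold KA KB
  simp_rw [← lintegral_const_mul _ (KB_meas n _)]
  rw [← lintegral_tsum (fun l => ((KB_meas n _).const_mul _).aemeasurable)]
  refine setLIntegral_congr_fun measurableSet_Ioo fun x hx => ?_
  have hy := YY_pos hx
  have hy1 := YY_lt_one hx
  have h2 : (2 : ENNReal) = ENNReal.ofReal 2 := by simp
  have hx0 := hx.1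
  have hx1 := hx.2
  have hsq : x ^ 2 < 1 := by nlinarith [hx.1, hx.2]
  have hysq : YY x ^ 2 < 1 := by nlinarith
  have h1 : 0 < 1 - x ^ 2 := by linarith
  have hs : HasSum (fun l : ℕ => 2 * (x ^ n * YY x ^ (s + 1 + 2 * (l : ℝ)) * (2 / (1 - x ^ 2))))
      (x ^ n * YY x ^ s / x) := by
    have := (hasSum_geometric_of_lt_one (sq_nonneg (YY x)) hysq).mul_left
      (2 * (x ^ n * (YY x ^ s * YY x) * (2 / (1 - x ^ 2))))
    refine hasSum_cast' this (fun l => ?_) ?_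
    · rw [Real.rpow_add hy, Real.rpow_add hy, Real.rpow_one, Real.rpow_mul hy.le, Real.rpow_natCast]
      norm_num
      ring
    · have e : (1 - YY x ^ 2)⁻¹ = (1 + x) ^ 2 / (4 * x) := by
        rw [inv_eq_one_div, div_eq_div_iff (by nlinarith) (by positivity)]
        unfold YY
        field_simp
        ring
      rw [e]
      have : YY x = (1 - x) / (1 + x) := rfl
      generalize YY x ^ s = z
      rw [this]
      have h3 : 1 - x ≠ 0 := by linarith
      have h5 : 1 - x ^ 2 = (1 - x) * (1 + x) := by ring
      rw [h5]
      field_simp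
      ring
  simp only [h2]
  rw [← hs.tsum_eq, ENNReal.ofReal_tsum_of_nonneg (fun l => by positivity) hs.summable]
  refine tsum_congr fun l => ?_
  rw [ENNReal.ofReal_mul (by norm_num)]

lemma YY_hasDerivAt {x : ℝ} (hx : x ∈ Set.Ioo (0:ℝ) 1) (s : ℝ) :
    HasDerivAt (fun t => YY t ^ s) (-(s * (YY x ^ s * (2 / (1 - x ^ 2))))) x := by
  have hy := YY_pos hx
  have hx0 := hx.1
  have hx1 := hx.2
  have h1 : HasDerivAt YY (((-1) * (1 + x) - (1 - x) * 1) / (1 + x) ^ 2) x := by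
    unfold YY
    exact ((hasDerivAt_id x).const_sub 1).div ((hasDerivAt_id x).const_add 1) (by simp; linarith)
  convert h1.rpow_const (p := s) (Or.inl hy.ne') using 1
  rw [Real.rpow_sub hy, Real.rpow_one]
  have : YY x = (1 - x) / (1 + x) := rfl
  generalize YY x ^ s = z
  rw [this]
  have h3 : 1 - x ≠ 0 := by linarith
  have h5 : 1 - x ^ 2 = (1 - x) * (1 + x) := by ring
  rw [h5]
  field_simp
  ring

lemma YY_cont (s : ℝ) (hs : 0 < s) : ContinuousOn (fun t => YY t ^ s) (Set.Icc (0:ℝ) 1) := by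
  refine ContinuousOn.rpow_const ?_ (fun x _ => Or.inr hs.le)
  unfold YY
  refine ContinuousOn.div (by fun_prop) (by fun_prop) fun x hx => ?_
  have := hx.1
  positivity

lemma GG_nonneg {x : ℝ} (hx : x ∈ Set.Ioo (0:ℝ) 1) (s : ℝ) (hs : 0 < s) :
    0 ≤ s * (YY x ^ s * (2 / (1 - x ^ 2))) := by
  have hy := YY_pos hx
  have : 0 < 1 - x ^ 2 := by nlinarith [hx.1, hx.2]
  positivity

lemma GG_integrable (s : ℝ) (hs : 0 < s) :
    IntegrableOn (fun x => s * (YY x ^ s * (2 / (1 - x ^ 2)))) (Set.Ioc 0 1) := by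
  refine intervalIntegral.integrableOn_deriv_of_nonneg (g := fun t => -(YY t ^ s))
    (YY_cont s hs).neg ?_ (fun x hx => GG_nonneg hx s hs)
  intro x hx
  exact hasDerivAt_cast' (YY_hasDerivAt hx s).neg (fun _ => rfl) (neg_neg _).symm

lemma KB_zero (s : ℝ) (hs : 0 < s) : ENNReal.ofReal s * KB 0 s = 1 := by
  unfold KB
  rw [← lintegral_const_mul _ (KB_meas 0 s)]
  have e : ∫⁻ x in Set.Ioo (0:ℝ) 1, ENNReal.ofReal s *
      ENNReal.ofReal (x ^ 0 * YY x ^ s * (2 / (1 - x ^ 2))) =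
      ∫⁻ x in Set.Ioo (0:ℝ) 1, ENNReal.ofReal (s * (YY x ^ s * (2 / (1 - x ^ 2)))) := by
    refine lintegral_congr fun x => ?_
    rw [← ENNReal.ofReal_mul hs.le]
    simp
  rw [e, ← ofReal_integral_eq_lintegral_ofReal]
  · rw [← integral_Ioc_eq_integral_Ioo, ← intervalIntegral.integral_of_le zero_le_one,
      intervalIntegral.integral_eq_sub_of_hasDerivAt_of_le (f := fun t => -(YY t ^ s)) zero_le_one
      (YY_cont s hs).neg]
    · simp [YY, Real.zero_rpow hs.ne']
    · intro x hx
      exact hasDerivAt_cast' (YY_hasDerivAt hx s).neg (fun _ => rfl) (neg_neg _).symm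
    · rw [intervalIntegrable_iff_integrableOn_Ioc_of_le zero_le_one]
      exact GG_integrable s hs
  · exact (GG_integrable s hs).mono_set Set.Ioo_subset_Ioc_self
  · exact (ae_restrict_iff' measurableSet_Ioo).2 (Filter.Eventually.of_forall fun x hx =>
      GG_nonneg hx s hs)

lemma KA_KB (n : ℕ) (hn : 0 < n) (s : ℝ) (hs : 0 < s) :
    ENNReal.ofReal n * KA n s = ENNReal.ofReal s * KB n s := by
  have hn0 : (0:ℝ) ≤ n := by positivity
  unfold KA KB
  rw [← lintegral_const_mul _ (KB_meas n s), ← lintegral_const_mul _ (KA_meas n s)]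
  have e1 : ∫⁻ x in Set.Ioo (0:ℝ) 1, ENNReal.ofReal s *
      ENNReal.ofReal (x ^ n * YY x ^ s * (2 / (1 - x ^ 2))) =
      ∫⁻ x in Set.Ioo (0:ℝ) 1, ENNReal.ofReal (x ^ n * (s * (YY x ^ s * (2 / (1 - x ^ 2))))) := by
    refine lintegral_congr fun x => ?_
    rw [← ENNReal.ofReal_mul hs.le]
    congr 1; ring
  have e2 : ∫⁻ x in Set.Ioo (0:ℝ) 1, ENNReal.ofReal n *
      ENNReal.ofReal (x ^ n * YY x ^ s / x) =
      ∫⁻ x in Set.Ioo (0:ℝ) 1, ENNReal.ofReal (n * x ^ (n - 1) * YY x ^ s) := by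
    refine setLIntegral_congr_fun measurableSet_Ioo fun x hx => ?_
    have := hx.1
    rw [← ENNReal.ofReal_mul hn0]
    congr 1
    obtain ⟨m, rfl⟩ : ∃ m, n = m + 1 := ⟨n - 1, by omega⟩
    simp only [Nat.add_sub_cancel, pow_succ]
    field_simp
  have i1 : IntegrableOn (fun x => x ^ n * (s * (YY x ^ s * (2 / (1 - x ^ 2))))) (Set.Ioc 0 1) := by
    refine Integrable.mono (GG_integrable s hs) ?_ ?_
    · have := YY_measurable
      exact Measurable.aestronglyMeasurable (by fun_prop)
    · refine (ae_restrict_iff' measurableSet_Ioc).2 (Filter.Eventually.of_forall fun x hx => ?_)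
      rw [norm_mul]
      refine mul_le_of_le_one_left (norm_nonneg _) ?_
      rw [norm_pow, Real.norm_of_nonneg hx.1.le]
      exact pow_le_one₀ hx.1.le hx.2
  have i2 : IntegrableOn (fun x => n * x ^ (n - 1) * YY x ^ s) (Set.Ioc 0 1) := by
    refine IntegrableOn.mono_set ?_ Set.Ioc_subset_Icc_self
    refine ContinuousOn.integrableOn_compact isCompact_Icc ?_
    exact ContinuousOn.mul (by fun_prop) (YY_cont s hs)
  have key : ∫ x in Set.Ioo (0:ℝ) 1, n * x ^ (n - 1) * YY x ^ s =
      ∫ x in Set.Ioo (0:ℝ) 1, x ^ n * (s * (YY x ^ s * (2 / (1 - x ^ 2)))) := by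
    rw [← sub_eq_zero, ← integral_Ioc_eq_integral_Ioo, ← integral_Ioc_eq_integral_Ioo,
      ← integral_sub i2 i1, ← intervalIntegral.integral_of_le zero_le_one,
      intervalIntegral.integral_eq_sub_of_hasDerivAt_of_le (f := fun t => t ^ n * (YY t ^ s))
      zero_le_one (ContinuousOn.mul (by fun_prop) (YY_cont s hs))]
    · simp [YY, Real.zero_rpow hs.ne', hn.ne']
    · intro x hx
      exact hasDerivAt_cast' ((hasDerivAt_pow n x).mul (YY_hasDerivAt hx s)) (fun _ => rfl) (by ring)
    · rw [intervalIntegrable_iff_integrableOn_Ioc_of_le zero_le_one]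
      exact i2.sub i1
  rw [e1, e2, ← ofReal_integral_eq_lintegral_ofReal, ← ofReal_integral_eq_lintegral_ofReal, key]
  · exact i1.mono_set Set.Ioo_subset_Ioc_self
  · exact (ae_restrict_iff' measurableSet_Ioo).2 (Filter.Eventually.of_forall fun x hx =>
      mul_nonneg (pow_nonneg hx.1.le _) (GG_nonneg hx s hs))
  · exact i2.mono_set Set.Ioo_subset_Ioc_self
  · refine (ae_restrict_iff' measurableSet_Ioo).2 (Filter.Eventually.of_forall fun x hx => ?_)
    have := YY_pos hx
    have := hx.1
    simp only [Pi.zero_apply]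
    positivity

/-- The connector. -/
noncomputable def CC (n : ℕ) (s : ℝ) : ENNReal := ENNReal.ofReal s * KB n s

lemma CC_zero (s : ℝ) (hs : 0 < s) : CC 0 s = 1 := KB_zero s hs

lemma CC_div_s (n : ℕ) (s : ℝ) (hs : 0 < s) : CC n s * (ENNReal.ofReal s)⁻¹ = KB n s := by
  unfold CC
  rw [mul_comm (ENNReal.ofReal s), mul_assoc, ENNReal.mul_inv_cancel, mul_one]
  · simpa using hs
  · simp

lemma CC_div_n (n : ℕ) (hn : 0 < n) (s : ℝ) (hs : 0 < s) :
    CC n s * (ENNReal.ofReal n)⁻¹ = KA n s := by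
  unfold CC
  rw [← KA_KB n hn s hs, mul_comm (ENNReal.ofReal n), mul_assoc, ENNReal.mul_inv_cancel, mul_one]
  · simpa using hn.ne'
  · simp

lemma CC_left (n : ℕ) (hn : 0 < n) (s : ℝ) (hs : 0 < s) :
    CC n s * (ENNReal.ofReal n)⁻¹ =
      ∑' l : ℕ, 2 * (CC n (s + 1 + 2 * l) * (ENNReal.ofReal (s + 1 + 2 * l))⁻¹) := by
  rw [CC_div_n n hn s hs, KA_expand]
  refine tsum_congr fun l => ?_
  rw [CC_div_s _ _ (by positivity)]

lemma CC_right (n : ℕ) (s : ℝ) (hs : 0 < s) :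
    CC n s * (ENNReal.ofReal s)⁻¹ =
      ∑' l : ℕ, 2 * (CC (n + 1 + 2 * l) s * (ENNReal.ofReal ((n + 1 + 2 * l : ℕ) : ℝ))⁻¹) := by
  rw [CC_div_s n s hs, KB_expand]
  refine tsum_congr fun l => ?_
  rw [CC_div_n _ (by omega) _ hs]

lemma KA_start (n : ℕ) (a : ℝ) (ha : a < 1) :
    KA n (-a) = SOp a [1] (fun N => CC n ((N : ℝ) - a)) := by
  rw [KA_expand]
  show _ = ∑' l : ℕ, _
  refine tsum_congr fun l => ?_
  have : (((0 + 1 + 2 * l : ℕ) : ℝ) - a) = -a + 1 + 2 * l := by push_cast; ring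
  have h0 : (0:ℝ) < -a + 1 + 2 * l := by
    have : (0:ℝ) ≤ l := by positivity
    linarith
  simp only [this, pow_one, CC_div_s _ _ h0]

/-- One step of the transport process. -/
def stepW (p : List ℕ) (b : Bool) : List ℕ := if b then plusOne p else 1 :: p

lemma plusOne_ne_nil {p : List ℕ} (hp : p ≠ []) : plusOne p ≠ [] := by
  cases p with
  | nil => exact absurd rfl hp
  | cons a t => simp [plusOne]

lemma stepW_ne_nil {p : List ℕ} (hp : p ≠ []) (b : Bool) : stepW p b ≠ [] := by
  cases b
  · simp [stepW]
  · simpa [stepW] using plusOne_ne_nil hp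

lemma foldW_ne_nil (w : List Bool) {p : List ℕ} (hp : p ≠ []) : w.foldl stepW p ≠ [] := by
  induction w generalizing p with
  | nil => simpa using hp
  | cons b w ih => exact ih (stepW_ne_nil hp b)

lemma SOp_succ_head (a : ℝ) (b : ℕ) (k : List ℕ) (f : ℕ → ENNReal) :
    SOp a ((b + 1) :: k) f =
      SOp a (b :: k) (fun n => f n * (ENNReal.ofReal ((n : ℝ) - a))⁻¹) := by
  rw [SOp_cons, SOp_cons]
  congr 1
  funext n
  refine tsum_congr fun l => ?_
  rw [pow_succ]
  ring

lemma SOp_plusOne (a : ℝ) (p : List ℕ) (hp : p ≠ []) (f : ℕ → ENNReal) :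
    SOp a (plusOne p) f = SOp a p (fun n => f n * (ENNReal.ofReal ((n : ℝ) - a))⁻¹) := by
  cases p with
  | nil => exact absurd rfl hp
  | cons b t => exact SOp_succ_head a b t f

noncomputable def ZZ (a : ℝ) (k p : List ℕ) : ENNReal :=
  SOp 0 k (fun n => SOp a p (fun N => CC n ((N : ℝ) - a)))

lemma pos_sub {a : ℝ} (ha : a < 1) {N : ℕ} (hN : 0 < N) : 0 < (N : ℝ) - a := by
  have : (1:ℝ) ≤ N := by exact_mod_cast hN
  linarith

lemma ZZ_nil (a : ℝ) (ha : a < 1) (p : List ℕ) (hp : p ≠ []) :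
    ZZ a [] p = SOp a p (fun _ => 1) := by
  show SOp a p (fun N => CC 0 ((N : ℝ) - a)) = _
  exact SOp_congr_pos a p hp _ _ fun N hN => CC_zero _ (pos_sub ha hN)

lemma ZZ_false (a : ℝ) (ha : a < 1) (b : ℕ) (k p : List ℕ) (hp : p ≠ []) :
    ZZ a ((b + 1) :: k) p = ZZ a (b :: k) (1 :: p) := by
  unfold ZZ
  rw [SOp_succ_head]
  refine SOp_congr_pos 0 _ (by simp) _ _ fun n hn => ?_
  rw [SOp_cons a 1 p, mul_comm, ← SOp_mul]
  refine SOp_congr_pos a p hp _ _ fun N hN => ?_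
  rw [mul_comm, sub_zero, CC_left n hn _ (pos_sub ha hN)]
  refine tsum_congr fun l => ?_
  have : (((N + 1 + 2 * l : ℕ) : ℝ) - a) = (N : ℝ) - a + 1 + 2 * l := by push_cast; ring
  rw [this, pow_one]

lemma ZZ_true (a : ℝ) (ha : a < 1) (k p : List ℕ) (hp : p ≠ []) :
    ZZ a (1 :: k) p = ZZ a k (plusOne p) := by
  unfold ZZ
  rw [SOp_cons]
  congr 1
  funext n
  rw [SOp_plusOne a p hp]
  have : ∀ l : ℕ, 2 * (SOp a p (fun N => CC (n + 1 + 2 * l) ((N : ℝ) - a)) *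
      (ENNReal.ofReal (((n + 1 + 2 * l : ℕ) : ℝ) - 0))⁻¹ ^ 1) =
      SOp a p (fun N => 2 * (CC (n + 1 + 2 * l) ((N : ℝ) - a) *
      (ENNReal.ofReal (((n + 1 + 2 * l : ℕ) : ℝ)))⁻¹)) := by
    intro l
    rw [SOp_mul, sub_zero, pow_one, mul_comm (SOp a p _), ← SOp_mul]
    congr 2
    funext N
    exact mul_comm _ _
  simp_rw [this]
  rw [← SOp_tsum]
  refine SOp_congr_pos a p hp _ _ fun N hN => ?_
  rw [CC_right n _ (pos_sub ha hN)]

lemma toWord_one_cons (b : ℕ) (k : List ℕ) : toWord (1 :: b :: k) = true :: toWord (b :: k) := by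
  simp [toWord]

lemma toWord_succ (b : ℕ) (k : List ℕ) : toWord ((b + 2) :: k) = false :: toWord ((b + 1) :: k) := by
  cases k <;> simp [toWord, List.replicate_succ]

lemma ZZ_main (a : ℝ) (ha : a < 1) (k : List ℕ) (hk : k ≠ []) (hpos : ∀ b ∈ k, 0 < b)
    (p : List ℕ) (hp : p ≠ []) :
    ZZ a k p = SOp a (plusOne ((toWord k).foldl stepW p)) (fun _ => 1) := by
  induction k generalizing p with
  | nil => exact absurd rfl hk
  | cons c k ih =>
    obtain ⟨b, rfl⟩ : ∃ b, c = b + 1 := ⟨c - 1, by have := hpos c (by simp); omega⟩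
    have hpos' : ∀ b ∈ k, 0 < b := fun x hx => hpos x (by simp [hx])
    clear hpos hk
    induction b generalizing p with
    | zero =>
      rw [zero_add, ZZ_true a ha k p hp]
      cases k with
      | nil =>
        rw [ZZ_nil a ha _ (plusOne_ne_nil hp)]
        simp [toWord]
      | cons d k =>
        rw [ih (by simp) hpos' _ (plusOne_ne_nil hp), toWord_one_cons]
        simp [stepW]
    | succ b ihb =>
      rw [ZZ_false a ha _ k p hp, ihb (1 :: p) (by simp), toWord_succ]
      simp [stepW]

lemma toWord_append (l l' : List ℕ) (hl : l ≠ []) (hl' : l' ≠ []) :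
    toWord (l ++ l') = toWord l ++ true :: toWord l' := by
  induction l with
  | nil => exact absurd rfl hl
  | cons a l ih =>
    cases l with
    | nil =>
      cases l' with
      | nil => exact absurd rfl hl'
      | cons b l' => simp [toWord]
    | cons b l =>
      have := ih (by simp)
      simp only [List.cons_append] at this ⊢
      simp [toWord, this]

lemma toWord_reverse (l : List ℕ) : toWord l.reverse = (toWord l).reverse := by
  induction l with
  | nil => simp [toWord]
  | cons a l ih =>
    cases l with
    | nil => simp [toWord]
    | cons b l =>
      rw [List.reverse_cons, toWord_append _ _ (by simp) (by simp), ih]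
      simp [toWord]

lemma fromWord_ne_nil (w : List Bool) : fromWord w ≠ [] := by
  cases w with
  | nil => simp [fromWord]
  | cons b w =>
    cases b
    · simp only [fromWord]
      split <;> simp
    · simp [fromWord]

lemma fromWord_false (w : List Bool) : fromWord (false :: w) = plusOne (fromWord w) := by
  have := fromWord_ne_nil w
  simp only [fromWord]
  split
  · next h => exact absurd h this
  · next h => simp [h, plusOne]

lemma HDual_reverse (k : List ℕ) : HDual k.reverse = (toWord k).foldl stepW [1] := by
  unfold HDual
  rw [toWord_reverse]
  generalize toWord k = w
  induction w using List.reverseRecOn with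
  | nil => simp [fromWord]
  | append_singleton w b ih =>
    rw [List.foldl_append, ← ih]
    cases b
    · simp [stepW, fromWord]
    · simp [stepW, fromWord_false]

lemma plusOne_length (p : List ℕ) : (plusOne p).length = p.length := by
  cases p <;> simp [plusOne]

lemma foldW_length (w : List Bool) (p : List ℕ) :
    (w.foldl stepW p).length = p.length + w.count false := by
  induction w generalizing p with
  | nil => simp
  | cons b w ih =>
    rw [List.foldl_cons, ih]
    cases b
    · simp [stepW]; omega
    · simp [stepW, plusOne_length]

lemma foldW_pos (w : List Bool) (p : List ℕ) (hp : ∀ a ∈ p, 0 < a) :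
    ∀ a ∈ w.foldl stepW p, 0 < a := by
  induction w generalizing p with
  | nil => simpa using hp
  | cons b w ih =>
    rw [List.foldl_cons]
    refine ih _ ?_
    cases b
    · simpa [stepW] using hp
    · cases p with
      | nil => simp [stepW, plusOne]
      | cons c p =>
        intro a ha
        simp only [stepW, plusOne, if_true, List.mem_cons] at ha
        rcases ha with rfl | ha
        · omega
        · exact hp a (by simp [ha])

lemma toWord_count (k : List ℕ) (hk : k ≠ []) (hpos : ∀ b ∈ k, 0 < b) :
    (toWord k).count false + k.length = k.sum := by
  induction k with
  | nil => exact absurd rfl hk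
  | cons a k ih =>
    have ha := hpos a (by simp)
    cases k with
    | nil => simp [toWord]; omega
    | cons b k =>
      have := ih (by simp) (fun x hx => hpos x (by simp [hx]))
      simp only [toWord, List.count_append, List.count_cons, List.length_cons, List.sum_cons,
        List.count_replicate] at this ⊢
      simp
      omega

lemma target_length (k : List ℕ) (hk : k ≠ []) (hpos : ∀ b ∈ k, 0 < b) :
    (plusOne (HDual k.reverse)).length = k.sum + 1 - k.length := by
  rw [plusOne_length, HDual_reverse, foldW_length]
  have := toWord_count k hk hpos
  simp
  omega

lemma target_form (k : List ℕ) :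
    ∃ b t, plusOne (HDual k.reverse) = (b + 2) :: t ∧ ∀ a ∈ t, 0 < a := by
  rw [HDual_reverse]
  have h1 := foldW_ne_nil (toWord k) (p := [1]) (by simp)
  have h2 := foldW_pos (toWord k) [1] (by simp)
  generalize (toWord k).foldl stepW [1] = q at h1 h2
  cases q with
  | nil => exact absurd rfl h1
  | cons c t =>
    have := h2 c (by simp)
    refine ⟨c - 1, t, ?_, fun a ha => h2 a (by simp [ha])⟩
    simp [plusOne]; omega

/-- The key identity for real parameters. -/
lemma real_identity (a : ℝ) (ha : a < 1) (k : List ℕ) (hk : k ≠ []) (hpos : ∀ b ∈ k, 0 < b) :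
    ∫⁻ x in Set.Ioo (0:ℝ) 1, SOp 0 k (fun n => ENNReal.ofReal (x ^ n)) *
      ENNReal.ofReal (YY x ^ (-a) / x) = SOp a (plusOne (HDual k.reverse)) (fun _ => 1) := by
  rw [HDual_reverse, ← ZZ_main a ha k hk hpos [1] (by simp)]
  have : ∀ x ∈ Set.Ioo (0:ℝ) 1, SOp 0 k (fun n => ENNReal.ofReal (x ^ n)) *
      ENNReal.ofReal (YY x ^ (-a) / x) =
      SOp 0 k (fun n => ENNReal.ofReal (x ^ n * YY x ^ (-a) / x)) := by
    intro x hx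
    rw [mul_comm, ← SOp_mul]
    congr 1
    funext n
    have := YY_pos hx
    have := hx.1
    rw [← ENNReal.ofReal_mul (by positivity)]
    congr 1
    ring
  rw [setLIntegral_congr_fun measurableSet_Ioo this,
    SOp_lintegral _ _ _ _ (fun n => KA_meas n (-a))]
  unfold ZZ
  congr 1
  funext n
  exact KA_start n a ha

lemma step_bound (a : ℝ) (ha : a < 1) : ∃ κ : ℝ, 0 < κ ∧ ∀ N : ℝ, 2 ≤ N → κ * N ≤ N - 1 - a := by
  rcases le_total a 0 with h | h
  · exact ⟨1 / 2, by norm_num, fun N hN => by linarith⟩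
  · exact ⟨(1 - a) / 2, by linarith, fun N hN => by nlinarith⟩

lemma SOp_finite_aux (a : ℝ) (ha : a < 1) (p : List ℕ) (hp : ∀ b ∈ p, 0 < b) (f : ℕ → ENNReal)
    (C : ENNReal) (hC : C ≠ ⊤) (δ : ℝ) (hδ : 0 < δ)
    (hf : ∀ n, 0 < n → f n ≤ C * ENNReal.ofReal (((n : ℝ) + 1) ^ (-δ)))
    (h0 : p = [] → f 0 ≠ ⊤) :
    SOp a p f ≠ ⊤ := by
  induction p generalizing f C δ with
  | nil => exact h0 rfl
  | cons q p ih =>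
    rw [SOp_cons]
    obtain ⟨κ, hκ, hκN⟩ := step_bound a ha
    have hq : q ≠ 0 := (hp q (by simp)).ne'
    have hsum : ∑' l : ℕ, ENNReal.ofReal (((l : ℝ) + 1) ^ (-1 - δ / 2)) ≠ ⊤ := by
      have h1 : Summable (fun l : ℕ => ((l : ℝ) + 1) ^ (-1 - δ / 2)) := by
        have := (summable_nat_add_iff 1).2
          (Real.summable_nat_rpow (p := -1 - δ / 2) |>.2 (by linarith))
        simpa using this
      exact h1.tsum_ofReal_ne_top
    have key : ∀ n : ℕ, (∑' l : ℕ, 2 * (f (n + 1 + 2 * l) *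
        ((ENNReal.ofReal (((n + 1 + 2 * l : ℕ) : ℝ) - a))⁻¹) ^ q)) ≤
        (2 * C * ENNReal.ofReal ((κ⁻¹) ^ q) *
          ∑' l : ℕ, ENNReal.ofReal (((l : ℝ) + 1) ^ (-1 - δ / 2))) *
          ENNReal.ofReal (((n : ℝ) + 1) ^ (-(δ / 2))) := by
      intro n
      rw [← ENNReal.tsum_mul_left, ← ENNReal.tsum_mul_right]
      refine ENNReal.tsum_le_tsum fun l => ?_
      have hN2 : (2:ℝ) ≤ (n : ℝ) + 2 + 2 * l := by
        have h1 : (0:ℝ) ≤ n := by positivity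
        have h2 : (0:ℝ) ≤ l := by positivity
        linarith
      have hNn : (n:ℝ) + 1 ≤ (n : ℝ) + 2 + 2 * l := by
        have h2 : (0:ℝ) ≤ l := by positivity
        linarith
      have hNl : (l:ℝ) + 1 ≤ (n : ℝ) + 2 + 2 * l := by
        have h1 : (0:ℝ) ≤ n := by positivity
        have h2 : (0:ℝ) ≤ l := by positivity
        linarith
      have e1 := hf (n + 1 + 2 * l) (by omega)
      have e2 : (((n + 1 + 2 * l : ℕ) : ℝ) + 1) = (n : ℝ) + 2 + 2 * l := by push_cast; ring
      have e3 : (((n + 1 + 2 * l : ℕ) : ℝ) - a) = ((n : ℝ) + 2 + 2 * l) - 1 - a := by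
        push_cast; ring
      rw [e2] at e1
      rw [e3]
      generalize (n : ℝ) + 2 + 2 * l = N at *
      have hN0 : 0 < N := by linarith
      have e4 : (ENNReal.ofReal (N - 1 - a))⁻¹ ≤ ENNReal.ofReal (κ⁻¹ * N⁻¹) := by
        rw [← mul_inv, ENNReal.ofReal_inv_of_pos (by positivity)]
        exact ENNReal.inv_le_inv.2 (ENNReal.ofReal_le_ofReal (hκN N hN2))
      have e5 : (ENNReal.ofReal (N - 1 - a))⁻¹ ^ q ≤ ENNReal.ofReal (κ⁻¹ ^ q * N⁻¹) := by
        refine (pow_le_pow_left' e4 q).trans ?_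
        rw [← ENNReal.ofReal_pow (by positivity)]
        refine ENNReal.ofReal_le_ofReal ?_
        rw [mul_pow]
        gcongr
        exact pow_le_of_le_one (by positivity) (inv_le_one_of_one_le₀ (by linarith)) hq
      have e6 : N ^ (-δ) * N⁻¹ ≤ ((l : ℝ) + 1) ^ (-1 - δ / 2) * ((n : ℝ) + 1) ^ (-(δ / 2)) := by
        have : N ^ (-δ) * N⁻¹ = N ^ (-1 - δ / 2) * N ^ (-(δ / 2)) := by
          rw [← Real.rpow_neg_one, ← Real.rpow_add hN0, ← Real.rpow_add hN0]
          congr 1; ring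
        rw [this]
        refine mul_le_mul ?_ ?_ (by positivity) (by positivity)
        · exact Real.rpow_le_rpow_of_nonpos (by positivity) hNl (by linarith)
        · exact Real.rpow_le_rpow_of_nonpos (by positivity) hNn (by linarith)
      calc 2 * (f (n + 1 + 2 * l) * (ENNReal.ofReal (N - 1 - a))⁻¹ ^ q)
          ≤ 2 * ((C * ENNReal.ofReal (N ^ (-δ))) * ENNReal.ofReal (κ⁻¹ ^ q * N⁻¹)) := by
            gcongr
        _ = 2 * C * ENNReal.ofReal (κ⁻¹ ^ q) * ENNReal.ofReal (N ^ (-δ) * N⁻¹) := by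
            rw [ENNReal.ofReal_mul (by positivity), ENNReal.ofReal_mul (by positivity)]
            ring
        _ ≤ 2 * C * ENNReal.ofReal (κ⁻¹ ^ q) * ENNReal.ofReal
              (((l : ℝ) + 1) ^ (-1 - δ / 2) * ((n : ℝ) + 1) ^ (-(δ / 2))) := by
            gcongr
        _ = _ := by
            rw [ENNReal.ofReal_mul (by positivity)]
            ring
    have hC' : (2 * C * ENNReal.ofReal ((κ⁻¹) ^ q) *
          ∑' l : ℕ, ENNReal.ofReal (((l : ℝ) + 1) ^ (-1 - δ / 2))) ≠ ⊤ := by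
      refine ENNReal.mul_ne_top (ENNReal.mul_ne_top (ENNReal.mul_ne_top (by simp) hC) (by simp)) hsum
    refine ih (fun b hb => hp b (by simp [hb])) _ _ hC' (δ / 2) (by linarith) (fun n _ => key n) ?_
    intro _
    exact ne_top_of_le_ne_top (ENNReal.mul_ne_top hC' (by simp)) (key 0)

lemma SOp_finite (a : ℝ) (ha : a < 1) (b : ℕ) (t : List ℕ) (ht : ∀ a ∈ t, 0 < a) :
    SOp a ((b + 2) :: t) (fun _ => 1) ≠ ⊤ := by
  rw [SOp_succ_head]
  obtain ⟨κ, hκ, hκN⟩ := step_bound a ha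
  refine SOp_finite_aux a ha _ ?_ _ (ENNReal.ofReal κ⁻¹) (by simp) 1 one_pos ?_ (by simp)
  · intro c hc
    rcases List.mem_cons.1 hc with rfl | hc
    · omega
    · exact ht c hc
  · intro n hn
    have h1 : (1:ℝ) ≤ n := by exact_mod_cast hn
    have := hκN (n + 1) (by linarith)
    rw [one_mul, ← ENNReal.ofReal_mul (by positivity), Real.rpow_neg_one, ← mul_inv,
      ENNReal.ofReal_inv_of_pos (by positivity)]
    refine ENNReal.inv_le_inv.2 (ENNReal.ofReal_le_ofReal ?_)
    linarith

/-- Strictly decreasing tuples of positive integers. -/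
abbrev QQ (r : ℕ) : Type := {n : Fin r → ℕ // StrictAnti n ∧ ∀ i, 0 < n i}

/-- The shifted index. -/
def NN {r : ℕ} (m : Fin r → ℕ) (i : Fin r) : ℕ := 2 * m i - (r - i.val)

def topF {r : ℕ} (m : Fin r → ℕ) : ℕ := if h : 0 < r then NN m ⟨0, h⟩ else 0

def hdF {r : ℕ} (m : Fin r → ℕ) : ℕ := if h : 0 < r then m ⟨0, h⟩ else 0

lemma anti_gap {r : ℕ} (m : Fin r → ℕ) (hm : StrictAnti m) (i j : Fin r) (hij : i ≤ j) :
    m j + (j.val - i.val) ≤ m i := by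
  have key : ∀ d : ℕ, ∀ (h : i.val + d < r), m ⟨i.val + d, h⟩ + d ≤ m i := by
    intro d
    induction d with
    | zero => intro h; simp
    | succ d ih =>
      intro h
      have h1 := ih (by omega)
      have h2 : m ⟨i.val + (d + 1), h⟩ < m ⟨i.val + d, by omega⟩ := by
        apply hm
        rw [Fin.lt_def]
        simp only
        omega
      omega
  have hij' : i.val ≤ j.val := hij
  have h := key (j.val - i.val) (by have := j.2; omega)
  have e : (⟨i.val + (j.val - i.val), by have := j.2; omega⟩ : Fin r) = j := by
    apply Fin.ext
    simp only
    omega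
  rw [e] at h
  exact h

lemma anti_lower {r : ℕ} (m : Fin r → ℕ) (hm : StrictAnti m) (hpos : ∀ i, 0 < m i) (i : Fin r) :
    r - i.val ≤ m i := by
  have hi := i.2
  have h1 := anti_gap m hm i ⟨r - 1, by omega⟩ (by rw [Fin.le_def]; simp only; omega)
  have h2 := hpos ⟨r - 1, by omega⟩
  simp only at h1
  omega

lemma hdF_lower {r : ℕ} (m : QQ r) : r ≤ hdF m.1 := by
  unfold hdF
  split_ifs with h
  · have := anti_lower m.1 m.2.1 m.2.2 ⟨0, h⟩
    simpa using this
  · omega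

lemma topF_eq {r : ℕ} (m : QQ r) : topF m.1 + r = 2 * hdF m.1 := by
  have h0 := hdF_lower m
  unfold topF hdF NN at *
  split_ifs with h
  · simp only [h, dif_pos] at h0 
    simp only
    omega
  · omega

lemma cons_anti {r : ℕ} (m : QQ r) (l : ℕ) :
    StrictAnti (Fin.cons (hdF m.1 + 1 + l) m.1 : Fin (r + 1) → ℕ) ∧
      ∀ i, 0 < (Fin.cons (hdF m.1 + 1 + l) m.1 : Fin (r + 1) → ℕ) i := by
  constructor
  · intro i j hij
    induction j using Fin.cases with
    | zero => exact absurd hij (by simp)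
    | succ j =>
      induction i using Fin.cases with
      | zero =>
        simp only [Fin.cons_succ, Fin.cons_zero]
        have hr : 0 < r := lt_of_le_of_lt (Nat.zero_le _) j.2
        have : m.1 j ≤ m.1 ⟨0, hr⟩ := m.2.1.antitone (by rw [Fin.le_def]; simp)
        simp only [hdF, hr, dif_pos]
        omega
      | succ i =>
        simp only [Fin.cons_succ]
        exact m.2.1 (by simpa using hij)
  · intro i
    induction i using Fin.cases with
    | zero => simp
    | succ i => simpa using m.2.2 i

lemma tail_anti {r : ℕ} (m : QQ (r + 1)) :
    StrictAnti (fun i : Fin r => m.1 i.succ) ∧ ∀ i : Fin r, 0 < m.1 i.succ :=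
  ⟨fun i j hij => m.2.1 (by simpa using hij), fun i => m.2.2 _⟩

lemma hd_tail_lt {r : ℕ} (m : QQ (r + 1)) : hdF (fun i : Fin r => m.1 i.succ) < m.1 0 := by
  unfold hdF
  split_ifs with h
  · exact m.2.1 (by simp [Fin.lt_def])
  · exact m.2.2 0

def consEquiv (r : ℕ) : QQ r × ℕ ≃ QQ (r + 1) where
  toFun x := ⟨Fin.cons (hdF x.1.1 + 1 + x.2) x.1.1, cons_anti x.1 x.2⟩
  invFun m := (⟨fun i => m.1 i.succ, tail_anti m⟩, m.1 0 - 1 - hdF (fun i : Fin r => m.1 i.succ))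
  left_inv := by
    rintro ⟨m, l⟩
    simp only [Fin.cons_succ, Fin.cons_zero]
    ext
    · rfl
    · show hdF m.1 + 1 + l - 1 - hdF m.1 = l
      omega
  right_inv := by
    intro m
    apply Subtype.ext
    funext i
    have := hd_tail_lt m
    induction i using Fin.cases with
    | zero =>
      simp only [Fin.cons_zero]
      omega
    | succ i => simp only [Fin.cons_succ]

lemma NN_cons_zero {r : ℕ} (m : QQ r) (l : ℕ) :
    NN ((consEquiv r (m, l)).1) 0 = topF m.1 + 1 + 2 * l := by
  have h1 := topF_eq m
  have h2 := hdF_lower m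
  simp only [NN, consEquiv, Equiv.coe_fn_mk, Fin.cons_zero, Fin.val_zero]
  omega

lemma NN_cons_succ {r : ℕ} (m : QQ r) (l : ℕ) (i : Fin r) :
    NN ((consEquiv r (m, l)).1) i.succ = NN m.1 i := by
  simp only [NN, consEquiv, Equiv.coe_fn_mk, Fin.cons_succ, Fin.val_succ]
  omega

lemma SOp_eq (a : ℝ) (k : List ℕ) (f : ℕ → ENNReal) :
    SOp a k f = ∑' m : QQ k.length, f (topF m.1) * ∏ i : Fin k.length,
      (2 * (ENNReal.ofReal ((NN m.1 i : ℝ) - a))⁻¹ ^ (k.getD i.val 0)) := by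
  induction k generalizing f with
  | nil =>
    have hu : ∀ m : QQ ([] : List ℕ).length, m = ⟨fun i => i.elim0, fun i => i.elim0, fun i => i.elim0⟩ := by
      intro m
      apply Subtype.ext
      funext i
      exact i.elim0
    rw [tsum_eq_single ⟨fun i => i.elim0, fun i => i.elim0, fun i => i.elim0⟩
      (fun m hm => absurd (hu m) hm)]
    simp [SOp, topF]
  | cons p k ih =>
    rw [SOp_cons, ih]
    show _ = ∑' m : QQ (k.length + 1), f (topF m.1) * ∏ i : Fin (k.length + 1),
      (2 * (ENNReal.ofReal ((NN m.1 i : ℝ) - a))⁻¹ ^ ((p :: k).getD i.val 0))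
    rw [← (consEquiv k.length).tsum_eq]
    refine Eq.trans ?_ (ENNReal.tsum_prod (f := fun (m : QQ k.length) (l : ℕ) =>
      f (topF (consEquiv k.length (m, l)).1) * ∏ i : Fin (k.length + 1),
      (2 * (ENNReal.ofReal ((NN (consEquiv k.length (m, l)).1 i : ℝ) - a))⁻¹ ^ ((p :: k).getD i.val 0)))).symm
    refine tsum_congr fun m => ?_
    rw [← ENNReal.tsum_mul_right]
    refine tsum_congr fun l => ?_
    rw [Fin.prod_univ_succ, NN_cons_zero]
    have : topF (consEquiv k.length (m, l)).1 = topF m.1 + 1 + 2 * l := by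
      rw [← NN_cons_zero]
      simp [topF]
    rw [this]
    simp only [NN_cons_succ, Fin.val_zero, Fin.val_succ, List.getD_cons_zero, List.getD_cons_succ]
    ring

abbrev PP (r : ℕ) : Type := {n : Fin r → ℕ //
          StrictAnti n ∧ (∀ i, 0 < n i) ∧ ∀ i, n i % 2 = (r - i.val) % 2}

def pqEquiv (r : ℕ) : QQ r ≃ PP r where
  toFun m := ⟨NN m.1, by
    have hl := anti_lower m.1 m.2.1 m.2.2
    have hg := anti_gap m.1 m.2.1
    refine ⟨?_, ?_, ?_⟩
    · intro i j hij
      have h1 := hl i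
      have h2 := hl j
      have h3 := hg i j hij.le
      have h4 : i.val < j.val := hij
      have h5 := j.2
      simp only [NN]
      omega
    · intro i
      have h1 := hl i
      have h5 := i.2
      simp only [NN]
      omega
    · intro i
      have h1 := hl i
      simp only [NN]
      omega⟩
  invFun n := ⟨fun i => (n.1 i + (r - i.val)) / 2, by
    have hg := anti_gap n.1 n.2.1
    constructor
    · intro i j hij
      have h3 := hg i j hij.le
      have h4 : i.val < j.val := hij
      have h5 := j.2
      have h6 := n.2.2.2 i
      have h7 := n.2.2.2 j
      simp only
      omega
    · intro i
      have h5 := i.2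
      have := n.2.2.1 i
      simp only
      omega⟩
  left_inv := by
    intro m
    apply Subtype.ext
    funext i
    have h1 := anti_lower m.1 m.2.1 m.2.2 i
    simp only [NN]
    omega
  right_inv := by
    intro n
    apply Subtype.ext
    funext i
    have h6 := n.2.2.2 i
    simp only [NN]
    omega

lemma AFn_eq (k : List ℕ) (hk : k ≠ []) (x : ℝ) (hx : x ∈ Set.Ioo (0:ℝ) 1) :
    AFn k x = (SOp 0 k (fun n => ENNReal.ofReal (x ^ n))).toReal := by
  have hl : 0 < k.length := List.length_pos_iff.2 hk
  have hx0 := hx.1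
  have hNN : ∀ (m : QQ k.length) i, 0 < NN m.1 i := fun m i => (pqEquiv k.length m).2.2.1 i
  rw [SOp_eq, ENNReal.tsum_toReal_eq]
  · unfold AFn
    rw [dif_pos hl, ← (pqEquiv k.length).tsum_eq, ← tsum_mul_left]
    refine tsum_congr fun m => ?_
    rw [ENNReal.toReal_mul, ENNReal.toReal_prod, ENNReal.toReal_ofReal (by positivity)]
    have h1 : topF m.1 = NN m.1 ⟨0, hl⟩ := by simp [topF, hl]
    rw [h1]
    have h2 : ∀ i : Fin k.length, (2 * (ENNReal.ofReal ((NN m.1 i : ℝ) - 0))⁻¹ ^ k.getD i.val 0).toReal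
        = 2 * ((NN m.1 i : ℝ) ^ k.get i)⁻¹ := by
      intro i
      rw [ENNReal.toReal_mul, ENNReal.toReal_pow, ENNReal.toReal_inv,
        ENNReal.toReal_ofReal (by simp)]
      simp
    rw [Finset.prod_congr rfl (fun i _ => h2 i), Finset.prod_mul_distrib, Finset.prod_inv_distrib]
    simp only [Finset.prod_const, Finset.card_univ, Fintype.card_fin]
    show 2 ^ k.length * (x ^ (NN m.1 ⟨0, hl⟩) / ∏ i, (NN m.1 i : ℝ) ^ k.get i) = _
    ring
  · intro m
    refine ENNReal.mul_ne_top (by simp) (ENNReal.prod_ne_top fun i _ => ?_)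
    refine ENNReal.mul_ne_top (by simp) (ENNReal.pow_ne_top ?_)
    rw [ENNReal.inv_ne_top]
    simpa using (hNN m i).ne'

noncomputable def tm {r : ℕ} (q : Fin r → ℕ) (m : QQ r) (α : ℂ) : ℂ :=
  ∏ i, (2 * (((NN m.1 i : ℂ) - α)⁻¹) ^ (q i))

noncomputable def tmR {r : ℕ} (q : Fin r → ℕ) (m : QQ r) (a : ℝ) : ℝ :=
  ∏ i, (2 * (((NN m.1 i : ℝ) - a)⁻¹) ^ (q i))

lemma NN_pos {r : ℕ} (m : QQ r) (i : Fin r) : 0 < NN m.1 i := (pqEquiv r m).2.2.1 i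

lemma HMTV_eq_list (l : List ℕ) (α : ℂ) :
    HMTV l (1 - α) = ∑' m : QQ l.length, tm (fun i => l.getD i.val 0) m α := by
  unfold HMTV
  refine tsum_congr fun m => ?_
  unfold tm
  rw [Finset.prod_mul_distrib]
  simp only [Finset.prod_const, Finset.card_univ, Fintype.card_fin]
  congr 1
  refine Finset.prod_congr rfl fun i _ => ?_
  rw [zpow_neg, zpow_natCast, inv_pow]
  have h1 := anti_lower m.1 m.2.1 m.2.2 i
  have h2 : NN m.1 i + l.length = 2 * m.1 i + i.val := by
    have := i.2
    unfold NN
    omega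
  have h3 : (NN m.1 i : ℂ) + l.length = 2 * m.1 i + i.val := by exact_mod_cast h2
  have h4 : 2 * (m.1 i : ℂ) - (l.length : ℂ) - 1 + (i.val : ℂ) + (1 - α) = (NN m.1 i : ℂ) - α := by
    linear_combination -h3
  rw [h4]
  simp

lemma HMTV_ofFn {r : ℕ} (q : Fin r → ℕ) (α : ℂ) :
    HMTV (List.ofFn q) (1 - α) = ∑' m : QQ r, tm q m α := by
  rw [HMTV_eq_list]
  have key : ∀ (l : List ℕ) (h : l.length = r) (q : Fin r → ℕ), (∀ i : Fin r, l.getD i.val 0 = q i) →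
      ∑' m : QQ l.length, tm (fun i => l.getD i.val 0) m α = ∑' m : QQ r, tm q m α := by
    intro l h q hq
    subst h
    have : (fun i : Fin l.length => l.getD i.val 0) = q := funext hq
    rw [this]
  exact key _ (by simp) q (fun i => by simp)

lemma SOp_ofFn {r : ℕ} (q : Fin r → ℕ) (a : ℝ) (ha : a < 1) :
    SOp a (List.ofFn q) (fun _ => 1) = ∑' m : QQ r, ENNReal.ofReal (tmR q m a) := by
  rw [SOp_eq]
  have key : ∀ (l : List ℕ) (h : l.length = r) (q : Fin r → ℕ), (∀ i : Fin r, l.getD i.val 0 = q i) →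
      ∑' m : QQ l.length, (1 : ENNReal) * ∏ i : Fin l.length,
      (2 * (ENNReal.ofReal ((NN m.1 i : ℝ) - a))⁻¹ ^ (l.getD i.val 0)) =
      ∑' m : QQ r, ENNReal.ofReal (tmR q m a) := by
    intro l h q hq
    subst h
    refine tsum_congr fun m => ?_
    rw [one_mul]
    unfold tmR
    have hp : ∀ i, 0 < (NN m.1 i : ℝ) - a := fun i => pos_sub ha (NN_pos m i)
    rw [ENNReal.ofReal_prod_of_nonneg (fun i _ => by have := hp i; positivity)]
    refine Finset.prod_congr rfl fun i _ => ?_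
    have := hp i
    rw [ENNReal.ofReal_mul (by norm_num), ENNReal.ofReal_pow (by positivity),
      ENNReal.ofReal_inv_of_pos this, hq]
    simp
  exact key _ (by simp) q (fun i => by simp)

/-- The density. -/
noncomputable def WW (k : List ℕ) (x : ℝ) : ENNReal :=
  SOp 0 k (fun n => ENNReal.ofReal (x ^ n)) * ENNReal.ofReal (1 / x)

noncomputable def XX (x : ℝ) : ℝ := - Real.log (YY x)

noncomputable def MM (k : List ℕ) : Measure ℝ :=
  (volume.restrict (Set.Ioo (0:ℝ) 1)).withDensity (WW k)

lemma WW_measurable (k : List ℕ) : Measurable (WW k) := by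
  refine Measurable.mul (SOp_measurable 0 k _ fun n => by fun_prop) (by fun_prop)

lemma XX_measurable : Measurable XX := by
  have := YY_measurable
  unfold XX
  fun_prop

lemma SOp_target_finite (k : List ℕ) (a : ℝ) (ha : a < 1) :
    SOp a (plusOne (HDual k.reverse)) (fun _ => 1) ≠ ⊤ := by
  obtain ⟨b, t, h, ht⟩ := target_form k
  rw [h]
  exact SOp_finite a ha b t ht

lemma lint_WW (k : List ℕ) (hk : k ≠ []) (hpos : ∀ b ∈ k, 0 < b) (a : ℝ) (ha : a < 1) :
    ∫⁻ x in Set.Ioo (0:ℝ) 1, WW k x * ENNReal.ofReal (Real.exp (a * XX x)) =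
      SOp a (plusOne (HDual k.reverse)) (fun _ => 1) := by
  rw [← real_identity a ha k hk hpos]
  refine setLIntegral_congr_fun measurableSet_Ioo fun x hx => ?_
  have hx0 := hx.1
  simp only [WW]
  rw [mul_assoc, ← ENNReal.ofReal_mul (by positivity)]
  congr 2
  rw [Real.rpow_def_of_pos (YY_pos hx), XX]
  ring_nf

lemma lint_MM (k : List ℕ) (hk : k ≠ []) (hpos : ∀ b ∈ k, 0 < b) (a : ℝ) (ha : a < 1) :
    ∫⁻ x, ENNReal.ofReal (Real.exp (a * XX x)) ∂(MM k) =
      SOp a (plusOne (HDual k.reverse)) (fun _ => 1) := by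
  have := XX_measurable
  rw [MM, lintegral_withDensity_eq_lintegral_mul _ (WW_measurable k) (by fun_prop),
    ← lint_WW k hk hpos a ha]
  rfl

lemma expSet (k : List ℕ) (hk : k ≠ []) (hpos : ∀ b ∈ k, 0 < b) (a : ℝ) (ha : a < 1) :
    a ∈ interior (ProbabilityTheory.integrableExpSet XX (MM k)) := by
  have hm := XX_measurable
  refine interior_mono (s := Set.Iio 1) ?_ (by simpa using ha)
  intro c hc
  refine ⟨by fun_prop, ?_⟩
  rw [hasFiniteIntegral_iff_ofReal (Filter.Eventually.of_forall fun x => (Real.exp_pos _).le),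
    lint_MM k hk hpos c hc]
  exact (SOp_target_finite k c hc).lt_top

lemma MGF_real (k : List ℕ) (hk : k ≠ []) (hpos : ∀ b ∈ k, 0 < b) (a : ℝ) (ha : a < 1) :
    ProbabilityTheory.complexMGF XX (MM k) a =
      (((SOp a (plusOne (HDual k.reverse)) (fun _ => 1)).toReal : ℝ) : ℂ) := by
  have hm := XX_measurable
  rw [ProbabilityTheory.complexMGF_ofReal, ProbabilityTheory.mgf,
    integral_eq_lintegral_of_nonneg_ae (Filter.Eventually.of_forall fun x => (Real.exp_pos _).le)
      (by fun_prop), lint_MM k hk hpos a ha]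

lemma WW_lt_top (k : List ℕ) (hk : k ≠ []) (hpos : ∀ b ∈ k, 0 < b) :
    ∀ᵐ x ∂(volume.restrict (Set.Ioo (0:ℝ) 1)), WW k x < ⊤ := by
  refine ae_lt_top (WW_measurable k) ?_
  have h := lint_WW k hk hpos 0 (by norm_num)
  simp only [zero_mul, Real.exp_zero, ENNReal.ofReal_one, mul_one] at h
  rw [h]
  exact SOp_target_finite k 0 (by norm_num)

lemma MGF_iter (k : List ℕ) (hk : k ≠ []) (hpos : ∀ b ∈ k, 0 < b) (m : ℕ) (α : ℂ)
    (hre : α.re < 1) :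
    (∫ x in (0:ℝ)..1,
        ((AFn k x * Real.log ((1 - x) / (1 + x)) ^ m : ℝ) : ℂ) /
          ((x : ℂ) * (((1 - x) / (1 + x) : ℝ) : ℂ) ^ α)) =
    (-1) ^ m * iteratedDeriv m (ProbabilityTheory.complexMGF XX (MM k)) α := by
  rw [ProbabilityTheory.iteratedDeriv_complexMGF (expSet k hk hpos _ hre),
    intervalIntegral.integral_of_le zero_le_one, integral_Ioc_eq_integral_Ioo, MM,
    integral_withDensity_eq_integral_toReal_smul (WW_measurable k) (WW_lt_top k hk hpos),
    ← integral_const_mul]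
  refine setIntegral_congr_fun measurableSet_Ioo fun x hx => ?_
  have hx0 := hx.1
  have hy := YY_pos hx
  have hA := AFn_eq k hk x hx
  have hW : (WW k x).toReal = AFn k x / x := by
    rw [WW, ENNReal.toReal_mul, ENNReal.toReal_ofReal (by positivity), hA]
    ring
  simp only [hW]
  have hy' : ((YY x : ℝ) : ℂ) ≠ 0 := by exact_mod_cast hy.ne'
  show ((AFn k x * Real.log (YY x) ^ m : ℝ) : ℂ) / ((x : ℂ) * ((YY x : ℝ) : ℂ) ^ α) = _
  have e : Complex.exp (α * (XX x : ℂ)) = (((YY x : ℝ) : ℂ) ^ α)⁻¹ := by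
    rw [Complex.cpow_def_of_ne_zero hy', ← Complex.exp_neg, XX, ← Complex.ofReal_log hy.le]
    push_cast
    ring_nf
  rw [e, XX, Complex.real_smul]
  push_cast
  rw [neg_pow (Real.log (YY x) : ℂ) m]
  have : ((-1 : ℂ) ^ m) * (-1) ^ m = 1 := by
    rw [← mul_pow]; simp
  have h2 : (-1 : ℂ) ^ m * ((AFn k x : ℂ) / x * ((-1) ^ m * (Real.log (YY x) : ℂ) ^ m *
      (((YY x : ℝ) : ℂ) ^ α)⁻¹)) = ((-1 : ℂ) ^ m * (-1) ^ m) * ((AFn k x : ℂ) / x * ((Real.log (YY x) : ℂ) ^ m *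
      (((YY x : ℝ) : ℂ) ^ α)⁻¹)) := by ring
  rw [h2, this, one_mul, div_eq_mul_inv, mul_inv]
  ring

lemma adT_succ {A : Type*} [AddCommMonoid A] (r M : ℕ) (f : (Fin (r + 1) → ℕ) → A) :
    ∑ j ∈ Finset.Nat.antidiagonalTuple (r + 1) M, f j =
      ∑ i ∈ Finset.range (M + 1), ∑ j ∈ Finset.Nat.antidiagonalTuple r (M - i), f (Fin.cons i j) := by
  rw [Finset.sum_sigma']
  refine Finset.sum_bij' (fun j _ => ⟨j 0, fun i => j i.succ⟩) (fun p _ => Fin.cons p.1 p.2)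
    ?_ ?_ ?_ ?_ ?_
  · intro j hj
    rw [Finset.Nat.mem_antidiagonalTuple, Fin.sum_univ_succ] at hj
    simp only [Finset.mem_sigma, Finset.mem_range, Finset.Nat.mem_antidiagonalTuple]
    omega
  · rintro ⟨i, j⟩ hp
    simp only [Finset.mem_sigma, Finset.mem_range, Finset.Nat.mem_antidiagonalTuple] at hp
    rw [Finset.Nat.mem_antidiagonalTuple, Fin.sum_univ_succ]
    simp only [Fin.cons_zero, Fin.cons_succ]
    omega
  · intro j hj
    funext i
    induction i using Fin.cases with
    | zero => simp
    | succ i => simp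
  · rintro ⟨i, j⟩ hp
    simp
  · intro j hj
    congr 1
    funext i
    induction i using Fin.cases with
    | zero => simp
    | succ i => simp

lemma single_hasDeriv (N z : ℂ) (h : N ≠ z) (p : ℕ) :
    HasDerivAt (fun z => ((N - z)⁻¹) ^ p) (p * ((N - z)⁻¹) ^ (p + 1)) z := by
  have h0 : N - z ≠ 0 := sub_ne_zero.2 h
  have h1 : HasDerivAt (fun z => N - z) (-1) z := by
    simpa using (hasDerivAt_id z).const_sub N
  have h2 := (h1.fun_inv h0).fun_pow p
  refine h2.congr_deriv ?_
  cases p with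
  | zero => simp
  | succ p =>
    simp only [Nat.add_sub_cancel]
    rw [neg_neg, one_div, ← inv_pow]
    ring

lemma single_analytic (N z : ℂ) (h : N ≠ z) (p : ℕ) :
    AnalyticAt ℂ (fun z => ((N - z)⁻¹) ^ p) z :=
  ((analyticAt_const.sub analyticAt_id).inv (sub_ne_zero.2 h)).pow p

lemma single_iter (N : ℂ) (p j : ℕ) (z : ℂ) (h : N ≠ z) :
    iteratedDeriv j (fun z => ((N - z)⁻¹) ^ p) z =
      j.factorial * (Nat.choose (p + j - 1) j : ℂ) * ((N - z)⁻¹) ^ (p + j) := by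
  induction j generalizing p with
  | zero => simp
  | succ j ih =>
    rw [iteratedDeriv_succ']
    have hev : deriv (fun z => ((N - z)⁻¹) ^ p) =ᶠ[nhds z]
        fun z => (p : ℂ) * ((N - z)⁻¹) ^ (p + 1) := by
      have : ∀ᶠ w in nhds z, w ≠ N := eventually_ne_nhds h.symm
      filter_upwards [this] with w hw
      exact (single_hasDeriv N w hw.symm p).deriv
    rw [hev.iteratedDeriv_eq, iteratedDeriv_const_mul_field, ih]
    have e1 : p + 1 + j - 1 = p + j := by omega
    have e2 : p + (j + 1) - 1 = p + j := by omega
    rw [e1, e2]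
    have h3 := Nat.choose_succ_right_eq (p + j) j
    rw [Nat.add_sub_cancel_right] at h3
    have h4 : ((p + j).choose (j + 1) : ℂ) * (j + 1) = (p + j).choose j * p := by exact_mod_cast h3
    rw [Nat.factorial_succ]
    push_cast
    rw [show p + 1 + j = p + (j + 1) by ring]
    linear_combination (-(j.factorial : ℂ) * ((N - z)⁻¹) ^ (p + (j + 1))) * h4

lemma prod_analytic {r : ℕ} (N : Fin r → ℂ) (q : Fin r → ℕ) (z : ℂ) (h : ∀ i, N i ≠ z) :
    AnalyticAt ℂ (fun z => ∏ i, (2 * ((N i - z)⁻¹) ^ q i)) z := by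
  apply Finset.analyticAt_fun_prod
  intro i _
  exact analyticAt_const.mul (single_analytic _ _ (h i) _)

lemma prod_iter {r : ℕ} (N : Fin r → ℂ) (q : Fin r → ℕ) (M : ℕ) (z : ℂ) (h : ∀ i, N i ≠ z) :
    iteratedDeriv M (fun z => ∏ i, (2 * ((N i - z)⁻¹) ^ q i)) z =
      M.factorial * ∑ j ∈ Finset.Nat.antidiagonalTuple r M,
        ((∏ i, Nat.choose (q i + j i - 1) (j i) : ℕ) : ℂ) * ∏ i, (2 * ((N i - z)⁻¹) ^ (q i + j i)) := by
  induction r generalizing M with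
  | zero =>
    cases M with
    | zero => simp
    | succ M =>
      simp [iteratedDeriv_succ']
  | succ r ih =>
    have e : (fun z => ∏ i, (2 * ((N i - z)⁻¹) ^ q i)) =
        fun z => (2 * ((N 0 - z)⁻¹) ^ q 0) * ∏ i : Fin r, (2 * ((N i.succ - z)⁻¹) ^ q i.succ) := by
      funext z
      rw [Fin.prod_univ_succ]
    rw [e, iteratedDeriv_fun_mul, adT_succ, Finset.mul_sum]
    · refine Finset.sum_congr rfl fun i hi => ?_
      have hi' : i ≤ M := by simpa [Nat.lt_succ_iff] using hi
      rw [iteratedDeriv_const_mul_field, single_iter _ _ _ _ (h 0),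
        ih (fun i => N i.succ) (fun i => q i.succ) (M - i) (fun i => h _)]
      simp only [Fin.prod_univ_succ, Fin.cons_zero, Fin.cons_succ]
      rw [Finset.mul_sum, Finset.mul_sum, Finset.mul_sum]
      refine Finset.sum_congr rfl fun j _ => ?_
      have hf := Nat.choose_mul_factorial_mul_factorial hi'
      have hf' : (M.choose i : ℂ) * i.factorial * (M - i).factorial = M.factorial := by
        exact_mod_cast hf
      rw [← hf']
      push_cast
      ring
    · exact (analyticAt_const.mul (single_analytic _ _ (h 0) _)).contDiffAt
    · exact (prod_analytic (fun i => N i.succ) (fun i => q i.succ) z (fun i => h _)).contDiffAt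

lemma deriv_bound {ι : Type*} (F : ι → ℂ → ℂ)
    (hd : ∀ i, DifferentiableOn ℂ (F i) {z | z.re < 1})
    (hb : ∀ c : ℝ, c < 1 → ∃ u : ι → ℝ, Summable u ∧ ∀ i z, z.re < c → ‖F i z‖ ≤ u i)
    (c : ℝ) (hc : c < 1) :
    ∃ u : ι → ℝ, Summable u ∧ ∀ i z, z.re < c → ‖deriv (F i) z‖ ≤ u i := by
  obtain ⟨c', h1, h2⟩ := exists_between hc
  obtain ⟨u, hu, hle⟩ := hb c' h2
  have hR : 0 < (c' - c) / 2 := by linarith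
  refine ⟨fun i => u i / ((c' - c) / 2), hu.div_const _, fun i z hz => ?_⟩
  have hre : ∀ w ∈ Metric.closedBall z ((c' - c) / 2), w.re < c' := by
    intro w hw
    rw [Metric.mem_closedBall, dist_eq_norm] at hw
    have := (Complex.re_le_norm (w - z)).trans hw
    rw [Complex.sub_re] at this
    linarith
  refine Complex.norm_deriv_le_of_forall_mem_sphere_norm_le hR ?_ ?_
  · refine DifferentiableOn.diffContOnCl ?_
    rw [closure_ball _ hR.ne']
    exact (hd i).mono fun w hw => lt_trans (hre w hw) h2
  · intro w hw
    exact hle i w (hre w (Metric.sphere_subset_closedBall hw))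

lemma isOpen_half : IsOpen {z : ℂ | z.re < 1} := isOpen_lt Complex.continuous_re continuous_const

lemma tsum_deriv {ι : Type*} (F : ι → ℂ → ℂ)
    (hd : ∀ i, DifferentiableOn ℂ (F i) {z | z.re < 1})
    (hb : ∀ c : ℝ, c < 1 → ∃ u : ι → ℝ, Summable u ∧ ∀ i z, z.re < c → ‖F i z‖ ≤ u i)
    (z : ℂ) (hz : z.re < 1) :
    DifferentiableAt ℂ (fun w => ∑' i, F i w) z ∧
    deriv (fun w => ∑' i, F i w) z = ∑' i, deriv (F i) z := by
  obtain ⟨c, h1, h2⟩ := exists_between hz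
  obtain ⟨u, hu, hle⟩ := hb c h2
  have ho : IsOpen {z : ℂ | z.re < c} := isOpen_lt Complex.continuous_re continuous_const
  have hd' : ∀ i, DifferentiableOn ℂ (F i) {z | z.re < c} :=
    fun i => (hd i).mono fun w hw => lt_trans hw h2
  constructor
  · exact (Complex.differentiableOn_tsum_of_summable_norm hu hd' ho hle).differentiableAt
      (ho.mem_nhds h1)
  · exact (Complex.hasSum_deriv_of_summable_norm hu hd' ho hle h1).tsum_eq.symm

lemma tsum_iter {ι : Type*} (F : ι → ℂ → ℂ)
    (hd : ∀ i, DifferentiableOn ℂ (F i) {z | z.re < 1})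
    (hb : ∀ c : ℝ, c < 1 → ∃ u : ι → ℝ, Summable u ∧ ∀ i z, z.re < c → ‖F i z‖ ≤ u i)
    (M : ℕ) (z : ℂ) (hz : z.re < 1) :
    iteratedDeriv M (fun w => ∑' i, F i w) z = ∑' i, iteratedDeriv M (F i) z := by
  induction M generalizing F with
  | zero => simp
  | succ M ih =>
    rw [iteratedDeriv_succ']
    have hev : deriv (fun w => ∑' i, F i w) =ᶠ[nhds z] fun w => ∑' i, deriv (F i) w := by
      filter_upwards [isOpen_half.mem_nhds hz] with w hw
      exact (tsum_deriv F hd hb w hw).2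
    rw [hev.iteratedDeriv_eq, ih (fun i => deriv (F i)) (fun i => (hd i).deriv isOpen_half)
      (deriv_bound F hd hb)]
    simp only [iteratedDeriv_succ']

lemma NN_ne {r : ℕ} (m : QQ r) (i : Fin r) (z : ℂ) (hz : z.re < 1) : (NN m.1 i : ℂ) ≠ z := by
  intro h
  have h1 := pos_sub hz (NN_pos m i)
  rw [← h] at h1
  simp at h1

lemma tm_norm_le {r : ℕ} (q : Fin r → ℕ) (m : QQ r) (c : ℝ) (hc : c < 1) (z : ℂ) (hz : z.re ≤ c) :
    ‖tm q m z‖ ≤ tmR q m c := by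
  unfold tm tmR
  rw [norm_prod]
  refine Finset.prod_le_prod (fun i _ => norm_nonneg _) fun i _ => ?_
  have h1 := pos_sub hc (NN_pos m i)
  have h2 := Complex.re_le_norm ((NN m.1 i : ℂ) - z)
  rw [Complex.sub_re, Complex.natCast_re] at h2
  rw [norm_mul, norm_pow, norm_inv, Complex.norm_ofNat]
  gcongr
  linarith

/-- Admissibility of the exponents. -/
def Adm {r : ℕ} (q : Fin r → ℕ) : Prop := ∃ b t, List.ofFn q = (b + 2) :: t ∧ ∀ a ∈ t, 0 < a

lemma Adm_add {r : ℕ} (q j : Fin r → ℕ) (h : Adm q) : Adm (fun i => q i + j i) := by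
  obtain ⟨b, t, h1, h2⟩ := h
  cases r with
  | zero => simp at h1
  | succ r =>
    rw [List.ofFn_succ] at h1
    obtain ⟨h3, h4⟩ := List.cons_eq_cons.1 h1
    refine ⟨b + j 0, List.ofFn fun i : Fin r => q i.succ + j i.succ, ?_, ?_⟩
    · rw [List.ofFn_succ, h3]
      congr 1
      ring
    · intro a ha
      rw [List.mem_ofFn] at ha
      obtain ⟨i, rfl⟩ := ha
      have : 0 < q i.succ := h2 _ (by rw [← h4, List.mem_ofFn]; exact ⟨i, rfl⟩)
      omega

lemma tmR_nonneg {r : ℕ} (q : Fin r → ℕ) (m : QQ r) (c : ℝ) (hc : c < 1) : 0 ≤ tmR q m c := by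
  refine Finset.prod_nonneg fun i _ => ?_
  have h1 := pos_sub hc (NN_pos m i)
  positivity

lemma tmR_summable {r : ℕ} (q : Fin r → ℕ) (hq : Adm q) (c : ℝ) (hc : c < 1) :
    Summable (fun m : QQ r => tmR q m c) := by
  obtain ⟨b, t, h1, h2⟩ := hq
  have h := SOp_ofFn q c hc
  have hf := SOp_finite c hc b t h2
  rw [← h1, h] at hf
  have := ENNReal.summable_toReal hf
  refine this.congr fun m => ?_
  rw [ENNReal.toReal_ofReal (tmR_nonneg q m c hc)]

lemma tm_summable {r : ℕ} (q : Fin r → ℕ) (hq : Adm q) (z : ℂ) (hz : z.re < 1) :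
    Summable (fun m : QQ r => tm q m z) :=
  Summable.of_norm_bounded (tmR_summable q hq z.re hz) fun m => tm_norm_le q m z.re hz z le_rfl

lemma tm_ofReal {r : ℕ} (q : Fin r → ℕ) (m : QQ r) (a : ℝ) : tm q m a = (tmR q m a : ℂ) := by
  unfold tm tmR
  push_cast
  rfl

lemma SOp_ofFn_toReal {r : ℕ} (q : Fin r → ℕ) (a : ℝ) (ha : a < 1) :
    (((SOp a (List.ofFn q) (fun _ => 1)).toReal : ℝ) : ℂ) = ∑' m : QQ r, tm q m a := by
  rw [SOp_ofFn q a ha, ENNReal.tsum_toReal_eq (fun m => ENNReal.ofReal_ne_top), Complex.ofReal_tsum]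
  refine tsum_congr fun m => ?_
  rw [ENNReal.toReal_ofReal (tmR_nonneg q m a ha), tm_ofReal]

lemma tm_differentiable {r : ℕ} (q : Fin r → ℕ) (m : QQ r) :
    DifferentiableOn ℂ (tm q m) {z | z.re < 1} := fun z hz =>
  (prod_analytic (fun i => (NN m.1 i : ℂ)) q z
    (fun i => NN_ne m i z hz)).differentiableAt.differentiableWithinAt

lemma tm_bound {r : ℕ} (q : Fin r → ℕ) (hq : Adm q) (c : ℝ) (hc : c < 1) :
    ∃ u : QQ r → ℝ, Summable u ∧ ∀ m z, z.re < c → ‖tm q m z‖ ≤ u m :=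
  ⟨fun m => tmR q m c, tmR_summable q hq c hc, fun m z hz => tm_norm_le q m c hc z hz.le⟩

lemma MGF_eq {r : ℕ} (q : Fin r → ℕ) (hq : Adm q) (k : List ℕ) (hk : k ≠ [])
    (hpos : ∀ b ∈ k, 0 < b) (hkq : plusOne (HDual k.reverse) = List.ofFn q) :
    Set.EqOn (ProbabilityTheory.complexMGF XX (MM k)) (fun z => ∑' m : QQ r, tm q m z)
      {z | z.re < 1} := by
  have hA : AnalyticOnNhd ℂ (ProbabilityTheory.complexMGF XX (MM k)) {z | z.re < 1} :=
    ProbabilityTheory.analyticOnNhd_complexMGF.mono fun z hz => expSet k hk hpos _ hz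
  have hB : AnalyticOnNhd ℂ (fun z => ∑' m : QQ r, tm q m z) {z | z.re < 1} := by
    refine DifferentiableOn.analyticOnNhd (fun z hz => ?_) isOpen_half
    exact (tsum_deriv (fun m => tm q m) (tm_differentiable q) (tm_bound q hq)
      z hz).1.differentiableWithinAt
  have hconn : IsPreconnected {z : ℂ | z.re < 1} := (convex_halfSpace_re_lt 1).isPreconnected
  refine hA.eqOn_of_preconnected_of_frequently_eq hB hconn (z₀ := 0) (by simp) ?_
  have ht : Filter.Tendsto (fun n : ℕ => ((-(1 / ((n : ℝ) + 1)) : ℝ) : ℂ)) Filter.atTop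
      (nhdsWithin 0 {0}ᶜ) := by
    refine tendsto_nhdsWithin_iff.2 ⟨?_, Filter.Eventually.of_forall fun n => ?_⟩
    · have h1 := (tendsto_one_div_add_atTop_nhds_zero_nat (𝕜 := ℝ)).neg
      have h2 := (Complex.continuous_ofReal.tendsto _).comp h1
      rw [neg_zero, Complex.ofReal_zero] at h2
      exact h2
    · have : (-(1 / ((n : ℝ) + 1)) : ℝ) ≠ 0 := by
        have : (0:ℝ) < (n : ℝ) + 1 := by positivity
        simp [this.ne']
      simpa only [Set.mem_compl_iff, Set.mem_singleton_iff, Complex.ofReal_eq_zero] using this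
  refine ht.frequently (Filter.Frequently.of_forall fun n => ?_)
  have hlt : (-(1 / ((n : ℝ) + 1)) : ℝ) < 1 := by
    have : (0:ℝ) < 1 / ((n : ℝ) + 1) := by positivity
    linarith
  rw [MGF_real k hk hpos _ hlt, hkq, SOp_ofFn_toReal q _ hlt]

lemma T_iter {r : ℕ} (q : Fin r → ℕ) (hq : Adm q) (M : ℕ) (z : ℂ) (hz : z.re < 1) :
    iteratedDeriv M (fun w => ∑' m : QQ r, tm q m w) z =
      M.factorial * ∑ j ∈ Finset.Nat.antidiagonalTuple r M,
        ((∏ i, Nat.choose (q i + j i - 1) (j i) : ℕ) : ℂ) *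
          HMTV (List.ofFn fun i => q i + j i) (1 - z) := by
  rw [tsum_iter (fun m => tm q m) (tm_differentiable q) (tm_bound q hq) M z hz]
  have h1 : ∀ m : QQ r, iteratedDeriv M (tm q m) z =
      M.factorial * ∑ j ∈ Finset.Nat.antidiagonalTuple r M,
        ((∏ i, Nat.choose (q i + j i - 1) (j i) : ℕ) : ℂ) * tm (fun i => q i + j i) m z :=
    fun m => prod_iter (fun i => (NN m.1 i : ℂ)) q M z (fun i => NN_ne m i z hz)
  rw [tsum_congr h1, tsum_mul_left, Summable.tsum_finsetSum]
  · congr 1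
    refine Finset.sum_congr rfl fun j _ => ?_
    rw [tsum_mul_left, HMTV_ofFn]
  · intro j _
    exact (tm_summable _ (Adm_add q j hq) z hz).mul_left _

theorem stmt1 (k : List ℕ) (hk : k ≠ []) (hkpos : ∀ a ∈ k, 0 < a)
    (m : ℕ) (hm : 0 < m) (α : ℂ) (hα : ∀ j : ℕ, 0 < j → α ≠ (j : ℂ)) (hre : α.re < 1) :
    (∫ x in (0:ℝ)..1,
        ((AFn k x * Real.log ((1 - x) / (1 + x)) ^ m : ℝ) : ℂ) /
          ((x : ℂ) * (((1 - x) / (1 + x) : ℝ) : ℂ) ^ α)) =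
      (-1) ^ m * (Nat.factorial m : ℂ) *
        ∑ j ∈ Finset.Nat.antidiagonalTuple (k.sum + 1 - k.length) m,
          ((∏ i : Fin (k.sum + 1 - k.length), Nat.choose
              ((plusOne (HDual k.reverse)).getD (i : ℕ) 0 + j i - 1) (j i) : ℕ) : ℂ) *
            HMTV (List.ofFn fun i : Fin (k.sum + 1 - k.length) =>
              (plusOne (HDual k.reverse)).getD (i : ℕ) 0 + j i) (1 - α) := by
  have hlen := target_length k hk hkpos
  have hofn : plusOne (HDual k.reverse) = List.ofFn fun i : Fin (k.sum + 1 - k.length) =>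
      (plusOne (HDual k.reverse)).getD (i : ℕ) 0 := by
    refine List.ext_getElem (by simp [hlen]) fun i h1 h2 => ?_
    simp [h1]
  have hadm : Adm fun i : Fin (k.sum + 1 - k.length) =>
      (plusOne (HDual k.reverse)).getD (i : ℕ) 0 := by
    obtain ⟨b, t, h, ht⟩ := target_form k
    exact ⟨b, t, hofn.symm.trans h, ht⟩
  rw [MGF_iter k hk hkpos m α hre, mul_assoc, ← T_iter _ hadm m α hre]
  congr 1
  exact Filter.EventuallyEq.iteratedDeriv_eq m (Filter.eventuallyEq_of_mem
    (isOpen_half.mem_nhds hre) (MGF_eq _ hadm k hk hkpos hofn))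
end
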